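/- arXiv:1906.00079 — 8 statements merged into one kernel-verified Lean document; each statement's English description precedes it below -/
import Mathlib

section
/- Let θ be a real number and M = [[m,n],[p,q]] ∈ GL₂(ℤ) with pθ+q ≠ 0, and set M(θ) := (mθ+n)/(pθ+q). Then the map φ : 𝕋²×ℝ → 𝕋²×ℝ given by φ([x⃗],t) := ([M x⃗], t(pθ+q)) is a bijection, and it intertwines the Kronecker flows: for every x⃗ ∈ ℝ² and t ∈ ℝ one has M·β^θ_t([x⃗]) = β^{M(θ)}_{t(pθ+q)}(M·[x⃗]) in 𝕋². Consequently φ is an isomorphism of the transformation groupoids 𝕋²⋊_θℝ → 𝕋²⋊_{M(θ)}ℝ. -/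
/-!
STATEMENT 0: For θ ∈ ℝ and M = [[m,n],[p,q]] ∈ GL₂(ℤ) with pθ+q ≠ 0, the map
φ([x⃗],t) := ([M x⃗], t(pθ+q)) on 𝕋²×ℝ is a bijection intertwining the Kronecker
flows of angle θ and M(θ) = (mθ+n)/(pθ+q); consequently it is an isomorphism of
the transformation groupoids 𝕋²⋊_θℝ → 𝕋²⋊_{M(θ)}ℝ.
-/

noncomputable section

/-- The circle ℝ/ℤ. -/
abbrev Torus : Type := AddCircle (1 : ℝ)

/-- The 2-torus ℝ²/ℤ², realized as a product of two circles. -/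
abbrev Torus2 : Type := Torus × Torus

/-- The quotient map ℝ² → 𝕋². -/
def torusMk (v : ℝ × ℝ) : Torus2 := ((v.1 : Torus), (v.2 : Torus))

/-- The action of an integer 2×2 matrix [[m,n],[p,q]] on 𝕋². -/
def matAct (m n p q : ℤ) (z : Torus2) : Torus2 :=
  (m • z.1 + n • z.2, p • z.1 + q • z.2)

/-- The Kronecker flow of angle θ on 𝕋²: β_t([x,y]) = [x+tθ, y+t]. -/
def kroneckerFlow (θ t : ℝ) (z : Torus2) : Torus2 :=
  (z.1 + ((t * θ : ℝ) : Torus), z.2 + ((t : ℝ) : Torus))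

/-- Composition of matrix actions is the action of the product matrix. -/
theorem matAct_comp (a b c d m n p q : ℤ) (z : Torus2) :
    matAct a b c d (matAct m n p q z) =
      matAct (a * m + b * p) (a * n + b * q) (c * m + d * p) (c * n + d * q) z := by
  simp only [matAct, smul_add, add_smul, mul_smul]
  ext1 <;> dsimp only <;> abel

theorem matAct_id (z : Torus2) : matAct 1 0 0 1 z = z := by
  simp [matAct]

theorem matAct_bijective (m n p q : ℤ)
    (hdet : m * q - n * p = 1 ∨ m * q - n * p = -1) :
    Function.Bijective (matAct m n p q) := by
  obtain ⟨e, he⟩ : ∃ e : ℤ, e * (m * q - n * p) = 1 := by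
    rcases hdet with h | h
    · exact ⟨1, by rw [h]; norm_num⟩
    · exact ⟨-1, by rw [h]; norm_num⟩
  refine Function.bijective_iff_has_inverse.2
    ⟨matAct (e * q) (-(e * n)) (-(e * p)) (e * m), fun z => ?_, fun z => ?_⟩
  · rw [matAct_comp]
    convert matAct_id z using 2 <;> linarith
  · rw [matAct_comp]
    convert matAct_id z using 2 <;> linarith

theorem matAct_flow (θ : ℝ) (m n p q : ℤ) (hpq : (p : ℝ) * θ + q ≠ 0) (t : ℝ) (z : Torus2) :
    matAct m n p q (kroneckerFlow θ t z) =
      kroneckerFlow (((m : ℝ) * θ + n) / ((p : ℝ) * θ + q))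
        (t * ((p : ℝ) * θ + q)) (matAct m n p q z) := by
  have h1 : t * ((p : ℝ) * θ + q) * (((m : ℝ) * θ + n) / ((p : ℝ) * θ + q)) =
      m • (t * θ) + n • t := by
    rw [zsmul_eq_mul, zsmul_eq_mul]
    field_simp
  have h2 : t * ((p : ℝ) * θ + q) = p • (t * θ) + q • t := by
    rw [zsmul_eq_mul, zsmul_eq_mul]
    ring
  simp only [kroneckerFlow, matAct]
  rw [h1, h2]
  simp only [AddCircle.coe_add, AddCircle.coe_zsmul, smul_add]
  ext1 <;> dsimp only <;> abel

theorem stmt0 (θ : ℝ) (m n p q : ℤ)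
    (hdet : m * q - n * p = 1 ∨ m * q - n * p = -1)
    (hpq : (p : ℝ) * θ + q ≠ 0) :
    -- the map φ
    ∀ φ : Torus2 × ℝ → Torus2 × ℝ,
      φ = (fun z => (matAct m n p q z.1, z.2 * ((p : ℝ) * θ + q))) →
      -- φ is a bijection
      Function.Bijective φ ∧
      -- φ intertwines the Kronecker flows of angle θ and M(θ)
      (∀ (x : ℝ × ℝ) (t : ℝ),
        matAct m n p q (kroneckerFlow θ t (torusMk x)) =
          kroneckerFlow (((m : ℝ) * θ + n) / ((p : ℝ) * θ + q))
            (t * ((p : ℝ) * θ + q)) (matAct m n p q (torusMk x))) ∧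
      -- consequently, φ is an isomorphism of the transformation groupoids:
      -- it maps composable pairs to composable pairs
      (∀ z w : Torus2 × ℝ,
        w.1 = kroneckerFlow θ (-z.2) z.1 →
          (φ w).1 = kroneckerFlow (((m : ℝ) * θ + n) / ((p : ℝ) * θ + q))
            (-(φ z).2) (φ z).1) ∧
      -- and it respects the composition ([x⃗],t)·([x⃗]−t(θ,1),s) = ([x⃗],t+s)
      (∀ (z w : Torus2 × ℝ),
        w.1 = kroneckerFlow θ (-z.2) z.1 →
          φ (z.1, z.2 + w.2) = ((φ z).1, (φ z).2 + (φ w).2)) := by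
  rintro φ rfl
  refine ⟨?_, fun x t => matAct_flow θ m n p q hpq t _, fun z w h => ?_, fun z w _ => ?_⟩
  · exact (matAct_bijective m n p q hdet).prodMap (mulRight_bijective₀ _ hpq)
  · dsimp only
    rw [h, matAct_flow θ m n p q hpq, neg_mul]
  · dsimp only
    rw [add_mul]

end
end

section
/- Let θ ∈ ℝ and let X ⊆ 𝕋² be the image of the x-axis, X = {[(t,0)] : t ∈ ℝ}. For (x,y) ∈ ℝ² and s ∈ ℝ, one has [(x,y)] ∈ X and [(x−sθ, y−s)] ∈ X if and only if y ∈ ℤ and s ∈ ℤ. Moreover, on the set R_θ := {(p,s) ∈ 𝕋²×ℝ : p ∈ X and p − s·[(θ,1)] ∈ X}, the assignment ([(x,y)], s) ↦ ([x], s) is a well-defined bijection R_θ → 𝕋×ℤ (where 𝕋 = ℝ/ℤ), and it intertwines the partially defined compositions: the composition (p,s)·(p−s[(θ,1)], s') = (p, s+s') corresponds to ([x],s)·([x−sθ],s') = ([x], s+s'). -/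
/-!
STATEMENT 2: Reduction of the Kronecker transformation groupoid 𝕋²⋊_θℝ to the
x-axis X ⊆ 𝕋²: membership characterization (y ∈ ℤ and s ∈ ℤ), and the
well-defined bijection R_θ → 𝕋×ℤ, ([(x,y)],s) ↦ ([x],s), intertwining the
partially defined compositions.
-/

noncomputable section

/-- The image of the x-axis in 𝕋². -/
def xAxis : Set Torus2 := {z | ∃ t : ℝ, z = torusMk (t, 0)}

/-- The source of the groupoid element (p, s) of 𝕋²⋊_θℝ, namely p − s·[(θ,1)]. -/
def src (θ : ℝ) (z : Torus2 × ℝ) : Torus2 :=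
  (z.1.1 - ((z.2 * θ : ℝ) : Torus), z.1.2 - ((z.2 : ℝ) : Torus))

/-- The reduction R_θ of 𝕋²⋊_θℝ to the x-axis: both range and source lie in X. -/
def Rset (θ : ℝ) : Set (Torus2 × ℝ) := {z | z.1 ∈ xAxis ∧ src θ z ∈ xAxis}

theorem mem_xAxis_iff (z : Torus2) : z ∈ xAxis ↔ z.2 = 0 := by
  constructor
  · rintro ⟨t, rfl⟩
    simp [torusMk]
  · intro h
    obtain ⟨a, b⟩ := z
    obtain ⟨t, rfl⟩ := QuotientAddGroup.mk_surjective a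
    refine ⟨t, ?_⟩
    simp only at h
    subst h
    simp [torusMk]

theorem coe_zero_iff (y : ℝ) : (y : Torus) = 0 ↔ ∃ k : ℤ, y = k := by
  rw [AddCircle.coe_eq_zero_iff]
  simp [eq_comm]

theorem mem_Rset_iff (θ : ℝ) (z : Torus2 × ℝ) :
    z ∈ Rset θ ↔ z.1.2 = 0 ∧ ∃ k : ℤ, z.2 = k := by
  rw [← coe_zero_iff]
  simp only [Rset, Set.mem_setOf_eq, mem_xAxis_iff, src]
  constructor
  · rintro ⟨h1, h2⟩
    refine ⟨h1, ?_⟩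
    rw [h1] at h2
    simpa using h2
  · rintro ⟨h1, h2⟩
    refine ⟨h1, ?_⟩
    rw [h1, h2]
    simp

theorem stmt2 (θ : ℝ) :
    -- membership characterization
    (∀ x y s : ℝ,
      (torusMk (x, y) ∈ xAxis ∧ torusMk (x - s * θ, y - s) ∈ xAxis) ↔
        ((∃ k : ℤ, y = k) ∧ (∃ k : ℤ, s = k))) ∧
    -- the well-defined bijection R_θ → 𝕋×ℤ, ([(x,y)],s) ↦ ([x],s)
    (∃ e : {z : Torus2 × ℝ // z ∈ Rset θ} ≃ (Torus × ℤ),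
      (∀ z, (e z).1 = z.val.1.1 ∧ ((e z).2 : ℝ) = z.val.2) ∧
      -- it intertwines the partially defined compositions:
      -- (p,s)·(p−s[(θ,1)], s') = (p, s+s') corresponds to
      -- ([x],n)·([x−nθ],n') = ([x], n+n')
      (∀ z w : {z : Torus2 × ℝ // z ∈ Rset θ},
        w.val.1 = src θ z.val →
          ∃ zw : {z : Torus2 × ℝ // z ∈ Rset θ},
            zw.val = (z.val.1, z.val.2 + w.val.2) ∧
            e zw = ((e z).1, (e z).2 + (e w).2))) := by
  refine ⟨?_, ?_⟩
  · intro x y s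
    rw [← coe_zero_iff, ← coe_zero_iff, mem_xAxis_iff, mem_xAxis_iff]
    simp only [torusMk, AddCircle.coe_sub]
    constructor
    · rintro ⟨h1, h2⟩
      refine ⟨h1, ?_⟩
      rw [h1] at h2
      simpa using h2
    · rintro ⟨h1, h2⟩
      refine ⟨h1, ?_⟩
      rw [h1, h2]
      simp
  · have hfl : ∀ z : {z : Torus2 × ℝ // z ∈ Rset θ}, ((⌊z.val.2⌋ : ℤ) : ℝ) = z.val.2 := by
      intro z
      obtain ⟨_, k, hk⟩ := (mem_Rset_iff θ z.val).1 z.2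
      rw [hk, Int.floor_intCast]
    refine ⟨{ toFun := fun z => (z.val.1.1, ⌊z.val.2⌋)
              invFun := fun q => ⟨((q.1, 0), (q.2 : ℝ)), (mem_Rset_iff θ _).2 ⟨rfl, q.2, rfl⟩⟩
              left_inv := ?_
              right_inv := ?_ }, ?_, ?_⟩
    · intro z
      have h1 := ((mem_Rset_iff θ z.val).1 z.2).1
      apply Subtype.ext
      exact Prod.ext (Prod.ext rfl h1.symm) (hfl z)
    · intro q
      exact Prod.ext rfl (Int.floor_intCast q.2)
    · intro z
      exact ⟨rfl, hfl z⟩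
    · intro z w _
      refine ⟨⟨(z.val.1, z.val.2 + w.val.2), (mem_Rset_iff θ _).2
        ⟨((mem_Rset_iff θ z.val).1 z.2).1, ⌊z.val.2⌋ + ⌊w.val.2⌋, ?_⟩⟩, rfl, ?_⟩
      · push_cast
        rw [hfl z, hfl w]
      · refine Prod.ext rfl ?_
        change ⌊z.val.2 + w.val.2⌋ = ⌊z.val.2⌋ + ⌊w.val.2⌋
        conv_lhs => rw [← hfl z, Int.floor_intCast_add]

end
end

section
/- Let θ ∈ ℝ and g = [[a,b],[c,d]] ∈ GL₂(ℤ) with μ(g) := (aθ+b) − (cθ+d)θ ≠ 0. Then for t₁, t₂ ∈ ℝ the following are equivalent: (i) t₁·(aθ+b, cθ+d) − t₂·(θ, 1) ∈ ℤ²; (ii) there exist k, l ∈ ℤ such that t₁ = (k+lθ)/μ(g) and t₂ = (k(cθ+d) + l(aθ+b))/μ(g). Moreover the integers k, l in (ii) are unique for given (t₁,t₂) when θ is irrational. -/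
/-!
STATEMENT 4: For θ ∈ ℝ and g = [[a,b],[c,d]] ∈ GL₂(ℤ) with
μ(g) = (aθ+b) − (cθ+d)θ ≠ 0, the condition
t₁·(aθ+b, cθ+d) − t₂·(θ,1) ∈ ℤ² is equivalent to the existence of k, l ∈ ℤ with
t₁ = (k+lθ)/μ(g) and t₂ = (k(cθ+d)+l(aθ+b))/μ(g); such k, l are unique for
given (t₁,t₂) when θ is irrational.
-/

theorem stmt4 (θ : ℝ) (a b c d : ℤ)
    (hdet : a * d - b * c = 1 ∨ a * d - b * c = -1)
    (hμ : ((a : ℝ) * θ + b) - ((c : ℝ) * θ + d) * θ ≠ 0)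
    (t₁ t₂ : ℝ) :
    -- (i) ↔ (ii)
    ((∃ k₁ k₂ : ℤ,
        t₁ * ((a : ℝ) * θ + b) - t₂ * θ = (k₁ : ℝ) ∧
        t₁ * ((c : ℝ) * θ + d) - t₂ = (k₂ : ℝ)) ↔
      (∃ k l : ℤ,
        t₁ = ((k : ℝ) + (l : ℝ) * θ) / (((a : ℝ) * θ + b) - ((c : ℝ) * θ + d) * θ) ∧
        t₂ = ((k : ℝ) * ((c : ℝ) * θ + d) + (l : ℝ) * ((a : ℝ) * θ + b)) /
              (((a : ℝ) * θ + b) - ((c : ℝ) * θ + d) * θ))) ∧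
    -- uniqueness of k, l in (ii) for irrational θ
    (Irrational θ →
      ∀ k l k' l' : ℤ,
        (t₁ = ((k : ℝ) + (l : ℝ) * θ) / (((a : ℝ) * θ + b) - ((c : ℝ) * θ + d) * θ) ∧
         t₂ = ((k : ℝ) * ((c : ℝ) * θ + d) + (l : ℝ) * ((a : ℝ) * θ + b)) /
              (((a : ℝ) * θ + b) - ((c : ℝ) * θ + d) * θ)) →
        (t₁ = ((k' : ℝ) + (l' : ℝ) * θ) / (((a : ℝ) * θ + b) - ((c : ℝ) * θ + d) * θ) ∧
         t₂ = ((k' : ℝ) * ((c : ℝ) * θ + d) + (l' : ℝ) * ((a : ℝ) * θ + b)) /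
              (((a : ℝ) * θ + b) - ((c : ℝ) * θ + d) * θ)) →
        k = k' ∧ l = l') := by
  generalize hA : (a : ℝ) * θ + b = A at *
  generalize hC : (c : ℝ) * θ + d = C at *
  refine ⟨⟨?_, ?_⟩, ?_⟩
  · rintro ⟨k₁, k₂, h1, h2⟩
    refine ⟨k₁, -k₂, ?_, ?_⟩
    · rw [eq_div_iff hμ]
      push_cast
      linear_combination h1 - θ * h2
    · rw [eq_div_iff hμ]
      push_cast
      linear_combination C * h1 - A * h2
  · rintro ⟨k, l, h1, h2⟩
    rw [eq_div_iff hμ] at h1 h2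
    refine ⟨k, -l, ?_, ?_⟩
    · apply mul_right_cancel₀ hμ
      linear_combination A * h1 - θ * h2
    · apply mul_right_cancel₀ hμ
      push_cast
      linear_combination C * h1 - h2
  · rintro hθ k l k' l' ⟨h1, -⟩ ⟨h2, -⟩
    rw [eq_div_iff hμ] at h1 h2
    have h : ((k - k' : ℤ) : ℝ) + ((l - l' : ℤ) : ℝ) * θ = 0 := by
      push_cast
      linear_combination h2 - h1
    have hl : l - l' = 0 := by
      by_contra hne
      have hir := (hθ.intCast_mul hne).intCast_add (k - k')
      rw [h] at hir
      exact not_irrational_zero hir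
    rw [hl] at h
    have hk : k - k' = 0 := by
      have h3 : ((k - k' : ℤ) : ℝ) = 0 := by simpa using h
      exact_mod_cast h3
    exact ⟨by omega, by omega⟩
end

section
/- Let θ ∈ ℝ, let g = [[a,b],[0,a]] ∈ SL₂(ℤ) (so a = ±1) with b ≠ 0, and define 𝒵_g := {(r₁, r₂, ([v],[w])) ∈ ℝ²×𝕋² : g·([(v,0)] + r₁·[(θ,1)]) = [(w,0)] + r₂·[(θ,1)] in 𝕋²}. Then for every (r₁,r₂,([v],[w])) ∈ 𝒵_g one has r₂ − a·r₁ ∈ ℤ, and the map 𝒵_g → 𝕋×ℝ×ℤ, (r₁, r₂, ([v],[w])) ↦ ([v], r₁, r₂ − a·r₁), is a bijection. -/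
/-!
STATEMENT 5: For θ ∈ ℝ and g = [[a,b],[0,a]] ∈ SL₂(ℤ) with b ≠ 0, the set
𝒵_g = {(r₁,r₂,([v],[w])) : g·([(v,0)] + r₁[(θ,1)]) = [(w,0)] + r₂[(θ,1)]}
satisfies r₂ − a r₁ ∈ ℤ on 𝒵_g, and (r₁,r₂,([v],[w])) ↦ ([v], r₁, r₂ − a r₁)
is a bijection 𝒵_g → 𝕋×ℝ×ℤ.
-/

noncomputable section

/-- The set 𝒵_g ⊆ ℝ²×𝕋² for g = [[a,b],[0,a]]. An element is (r₁, r₂, ([v],[w])). -/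
def Zset (θ : ℝ) (a b : ℤ) : Set (ℝ × ℝ × Torus2) :=
  {z | matAct a b 0 a ((z.2.2.1, (0 : Torus)) + torusMk (z.1 * θ, z.1))
        = ((z.2.2.2, (0 : Torus)) + torusMk (z.2.1 * θ, z.2.1))}

theorem mem_Zset_iff (θ : ℝ) (a b : ℤ) (r₁ r₂ : ℝ) (v w : Torus) :
    (r₁, r₂, (v, w)) ∈ Zset θ a b ↔
      w = a • (v + ((r₁ * θ : ℝ) : Torus)) + b • ((r₁ : ℝ) : Torus) - ((r₂ * θ : ℝ) : Torus) ∧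
      ∃ k : ℤ, r₂ - (a : ℝ) * r₁ = (k : ℝ) := by
  have h2 : (a • ((r₁ : ℝ) : Torus) = ((r₂ : ℝ) : Torus)) ↔
      ∃ k : ℤ, r₂ - (a : ℝ) * r₁ = (k : ℝ) := by
    rw [← AddCircle.coe_zsmul, eq_comm, ← sub_eq_zero, ← AddCircle.coe_sub,
      AddCircle.coe_eq_zero_iff]
    simp [eq_comm]
  rw [← h2]
  simp only [Zset, matAct, torusMk, Set.mem_setOf_eq, Prod.mk_add_mk, Prod.mk.injEq, zero_add,
    zero_smul]
  rw [eq_sub_iff_add_eq, eq_comm]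

theorem stmt5 (θ : ℝ) (a b : ℤ) (ha : a * a = 1) (hb : b ≠ 0) :
    -- r₂ − a·r₁ is an integer on 𝒵_g
    (∀ z ∈ Zset θ a b, ∃ k : ℤ, z.2.1 - (a : ℝ) * z.1 = (k : ℝ)) ∧
    -- (r₁, r₂, ([v],[w])) ↦ ([v], r₁, r₂ − a·r₁) is a bijection 𝒵_g → 𝕋×ℝ×ℤ
    (∃ e : {z : ℝ × ℝ × Torus2 // z ∈ Zset θ a b} ≃ (Torus × ℝ × ℤ),
      ∀ z, (e z).1 = z.val.2.2.1 ∧ (e z).2.1 = z.val.1 ∧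
        ((e z).2.2 : ℝ) = z.val.2.1 - (a : ℝ) * z.val.1) := by
  have key : ∀ z ∈ Zset θ a b, ∃ k : ℤ, z.2.1 - (a : ℝ) * z.1 = (k : ℝ) := by
    rintro ⟨r₁, r₂, v, w⟩ hz
    exact ((mem_Zset_iff θ a b r₁ r₂ v w).1 hz).2
  refine ⟨key, ?_⟩
  choose k hk using key
  let f : {z : ℝ × ℝ × Torus2 // z ∈ Zset θ a b} → Torus × ℝ × ℤ :=
    fun z => (z.val.2.2.1, z.val.1, k z.val z.property)
  have hf : Function.Bijective f := by
    constructor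
    · rintro ⟨⟨r₁, r₂, v, w⟩, hz⟩ ⟨⟨s₁, s₂, v', w'⟩, hz'⟩ h
      simp only [f, Prod.mk.injEq] at h
      obtain ⟨rfl, rfl, h3⟩ := h
      have e1 := hk _ hz
      have e2 := hk _ hz'
      rw [h3] at e1
      simp only at e1 e2
      have : r₂ = s₂ := by linarith
      subst this
      have hw := ((mem_Zset_iff _ _ _ _ _ _ _).1 hz).1
      have hw' := ((mem_Zset_iff _ _ _ _ _ _ _).1 hz').1
      rw [← hw'] at hw
      subst hw
      rfl
    · rintro ⟨v, r, n⟩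
      have hz := (mem_Zset_iff θ a b r ((n : ℝ) + a * r) v _).2 ⟨rfl, n, by ring⟩
      refine ⟨⟨_, hz⟩, ?_⟩
      have e := hk _ hz
      simp only [add_sub_cancel_right, Int.cast_inj] at e
      simp only [f, ← e]
  exact ⟨Equiv.ofBijective f hf, fun z => ⟨rfl, rfl, (hk z.val z.property).symm⟩⟩

end
end

section
/- Let H and H' be complex Hilbert spaces, let D be a densely defined self-adjoint operator on H and D' a densely defined self-adjoint operator on H', and let T : H' → H be a bounded linear operator. Fix a sign ε ∈ {+1, −1}. Assume that the set 𝒟 := {ζ ∈ dom(D') : Tζ ∈ dom(D)} is dense in H', and that there is a constant C ≥ 0 with ‖D(Tζ) + ε·T(D'ζ)‖ ≤ C‖ζ‖ for all ζ ∈ 𝒟. Then there is a constant C' ≥ 0 such that ‖T*(Dξ) + ε·D'(T*ξ)‖ ≤ C'‖ξ‖ for all ξ ∈ dom(D) with T*ξ ∈ dom(D'); that is, the operator T*D + ε·D'T* on this domain extends to a bounded operator H → H'. -/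
/-!
STATEMENT 11: If D, D' are densely defined self-adjoint operators on Hilbert
spaces H, H', T : H' → H is bounded, ε = ±1, the set
𝒟 = {ζ ∈ dom D' : Tζ ∈ dom D} is dense, and ‖D(Tζ) + ε T(D'ζ)‖ ≤ C‖ζ‖ on 𝒟,
then there is C' with ‖T*(Dξ) + ε D'(T*ξ)‖ ≤ C'‖ξ‖ for all ξ ∈ dom D with
T*ξ ∈ dom D'; i.e. T*D + ε D'T* extends to a bounded operator.
-/

theorem stmt11 {H H' : Type*}
    [NormedAddCommGroup H] [InnerProductSpace ℂ H] [CompleteSpace H]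
    [NormedAddCommGroup H'] [InnerProductSpace ℂ H'] [CompleteSpace H']
    (D : H →ₗ.[ℂ] H) (D' : H' →ₗ.[ℂ] H')
    (hDdense : Dense (D.domain : Set H)) (hD'dense : Dense (D'.domain : Set H'))
    (hDsa : D.adjoint = D) (hD'sa : D'.adjoint = D')
    (T : H' →L[ℂ] H) (ε : ℂ) (hε : ε = 1 ∨ ε = -1)
    (hdense : Dense {ζ : H' | ζ ∈ D'.domain ∧ T ζ ∈ D.domain})
    (C : ℝ) (hC : 0 ≤ C)
    (hbound : ∀ (ζ : H') (hζ : ζ ∈ D'.domain) (hTζ : T ζ ∈ D.domain),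
      ‖D ⟨T ζ, hTζ⟩ + ε • T (D' ⟨ζ, hζ⟩)‖ ≤ C * ‖ζ‖) :
    ∃ C' : ℝ, 0 ≤ C' ∧
      ∀ (ξ : H) (hξ : ξ ∈ D.domain)
        (hTξ : ContinuousLinearMap.adjoint T ξ ∈ D'.domain),
        ‖ContinuousLinearMap.adjoint T (D ⟨ξ, hξ⟩)
            + ε • D' ⟨ContinuousLinearMap.adjoint T ξ, hTξ⟩‖ ≤ C' * ‖ξ‖ := by
  have hfD : D.IsFormalAdjoint D := by
    have h := LinearPMap.adjoint_isFormalAdjoint hDdense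
    rwa [hDsa] at h
  have hfD' : D'.IsFormalAdjoint D' := by
    have h := LinearPMap.adjoint_isFormalAdjoint hD'dense
    rwa [hD'sa] at h
  have hεc : (starRingEnd ℂ) ε = ε := by
    rcases hε with rfl | rfl <;> simp
  refine ⟨C, hC, fun ξ hξ hTξ => ?_⟩
  set y := ContinuousLinearMap.adjoint T (D ⟨ξ, hξ⟩)
            + ε • D' ⟨ContinuousLinearMap.adjoint T ξ, hTξ⟩ with hy
  have key : ∀ ζ : H', ‖inner ℂ y ζ‖ ≤ C * ‖ξ‖ * ‖ζ‖ := by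
    have hcl : IsClosed {ζ : H' | ‖inner ℂ y ζ‖ ≤ C * ‖ξ‖ * ‖ζ‖} :=
      isClosed_le (by fun_prop) (by fun_prop)
    intro ζ
    refine hcl.closure_subset_iff.2 ?_ (hdense ζ)
    rintro ζ ⟨hζ, hTζ⟩
    have e1 := hfD ⟨ξ, hξ⟩ ⟨T ζ, hTζ⟩
    have e2 := hfD' ⟨ContinuousLinearMap.adjoint T ξ, hTξ⟩ ⟨ζ, hζ⟩
    have e : inner ℂ y ζ = inner ℂ ξ (D ⟨T ζ, hTζ⟩ + ε • T (D' ⟨ζ, hζ⟩)) := by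
      rw [hy, inner_add_left, inner_smul_left, hεc, inner_add_right, inner_smul_right,
        ContinuousLinearMap.adjoint_inner_left, ← ContinuousLinearMap.adjoint_inner_left T (D' ⟨ζ, hζ⟩) ξ]
      exact congrArg₂ (fun a b => a + ε * b) e1 e2
    change ‖inner ℂ y ζ‖ ≤ C * ‖ξ‖ * ‖ζ‖
    rw [e]
    calc _ ≤ ‖ξ‖ * ‖D ⟨T ζ, hTζ⟩ + ε • T (D' ⟨ζ, hζ⟩)‖ := norm_inner_le_norm _ _
      _ ≤ ‖ξ‖ * (C * ‖ζ‖) := by gcongr; exact hbound ζ hζ hTζ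
      _ = _ := by ring
  have h := key y
  rw [inner_self_eq_norm_sq_to_K] at h
  simp only [norm_pow, Complex.coe_algebraMap, Complex.norm_real, norm_norm] at h
  rcases (norm_nonneg y).eq_or_lt with h0 | h0
  · rw [← h0]; positivity
  · exact le_of_mul_le_mul_right (by rwa [sq] at h) h0
end

section
/- Fix θ ∈ ℝ and a nonzero integer b. For F ∈ 𝒮₂ define (ΞF)(k,[x],r,s) := ∫_ℝ F(k, [x−kθ], b(r+s+k), t)·e^{−2πits} dt and (Ξ'F)(k,[x],r,s) := ∫_ℝ F(k, [x+kθ], r/b − q − k, q)·e^{2πiqs} dq. Then Ξ and Ξ' map 𝒮₂ into 𝒮₂ and are mutually inverse bijections of 𝒮₂: Ξ'(ΞF) = F and Ξ(Ξ'F) = F for all F ∈ 𝒮₂. -/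
noncomputable section

open MeasureTheory

/-- Partial derivative in the first real variable. -/
noncomputable def pdr (f : ℝ → ℝ → ℂ) : ℝ → ℝ → ℂ :=
  fun r s => deriv (fun u => f u s) r

/-- Partial derivative in the second real variable. -/
noncomputable def pds (f : ℝ → ℝ → ℂ) : ℝ → ℝ → ℂ :=
  fun r s => deriv (fun u => f r u) s

/-- Iterated mixed partial derivative ∂^α in the two real variables. -/
noncomputable def pdMulti (α : ℕ × ℕ) (f : ℝ → ℝ → ℂ) : ℝ → ℝ → ℂ :=
  pdr^[α.1] (pds^[α.2] f)

/-- The Schwartz–Bruhat condition for a function F : ℤ×𝕋×ℝ² → ℂ: F is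
continuous, smooth in the two real variables, and all seminorms
‖F‖_{N,α} = sup (|k|^N + |r|^N + |s|^N + 1)·|∂^α_{(r,s)}F| are finite. -/
def IsSchwartzBruhat (F : ℤ → Torus → ℝ → ℝ → ℂ) : Prop :=
  (∀ k : ℤ, Continuous fun p : Torus × ℝ × ℝ => F k p.1 p.2.1 p.2.2) ∧
  (∀ (k : ℤ) (v : Torus), ContDiff ℝ (⊤ : ℕ∞) fun p : ℝ × ℝ => F k v p.1 p.2) ∧
  (∀ (N : ℕ) (α : ℕ × ℕ), ∃ C : ℝ, ∀ (k : ℤ) (v : Torus) (r s : ℝ),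
    (|(k : ℝ)| ^ N + |r| ^ N + |s| ^ N + 1) * ‖pdMulti α (F k v) r s‖ ≤ C)

/-- The seminorm ‖F‖_{N,α} of a Schwartz–Bruhat function. -/
noncomputable def SBseminorm (F : ℤ → Torus → ℝ → ℝ → ℂ) (N : ℕ) (α : ℕ × ℕ) : ℝ :=
  ⨆ p : ℤ × Torus × ℝ × ℝ,
    (|(p.1 : ℝ)| ^ N + |p.2.2.1| ^ N + |p.2.2.2| ^ N + 1) *
      ‖pdMulti α (F p.1 p.2.1) p.2.2.1 p.2.2.2‖

/-- The map Ξ: (ΞF)(k,[x],r,s) = ∫ F(k, [x−kθ], b(r+s+k), t)·e^{−2πits} dt. -/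
noncomputable def Xi (θ : ℝ) (b : ℤ) (F : ℤ → Torus → ℝ → ℝ → ℂ) :
    ℤ → Torus → ℝ → ℝ → ℂ :=
  fun k v r s => ∫ t : ℝ,
    F k (v - (((k : ℝ) * θ : ℝ) : Torus)) ((b : ℝ) * (r + s + (k : ℝ))) t *
      Complex.exp (((-(2 * Real.pi * t * s) : ℝ) : ℂ) * Complex.I)

/-- The map Ξ': (Ξ'F)(k,[x],r,s) = ∫ F(k, [x+kθ], r/b − q − k, q)·e^{2πiqs} dq. -/
noncomputable def Xi' (θ : ℝ) (b : ℤ) (F : ℤ → Torus → ℝ → ℝ → ℂ) :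
    ℤ → Torus → ℝ → ℝ → ℂ :=
  fun k v r s => ∫ q : ℝ,
    F k (v + (((k : ℝ) * θ : ℝ) : Torus)) (r / (b : ℝ) - q - (k : ℝ)) q *
      Complex.exp (((2 * Real.pi * q * s : ℝ) : ℂ) * Complex.I)


/-- Functions on ℤ×𝕋×ℝ². -/
abbrev Fn : Type := ℤ → Torus → ℝ → ℝ → ℂ

/-- The linear map with given partial derivatives. -/
def LL (a b : ℂ) : ℝ × ℝ →L[ℝ] ℂ :=
  (ContinuousLinearMap.fst ℝ ℝ ℝ).smulRight a + (ContinuousLinearMap.snd ℝ ℝ ℝ).smulRight b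

lemma LL_apply (a b : ℂ) (p : ℝ × ℝ) : LL a b p = p.1 * a + p.2 * b := by
  simp [LL]

lemma eq_LL (L : ℝ × ℝ →L[ℝ] ℂ) : L = LL (L (1, 0)) (L (0, 1)) := by
  ext <;> simp [LL_apply]

/-- F has partial derivatives Fr, Fs. -/
def HasD (F Fr Fs : Fn) : Prop :=
  ∀ k v r s, HasFDerivAt (fun p : ℝ × ℝ => F k v p.1 p.2) (LL (Fr k v r s) (Fs k v r s)) (r, s)

/-- Weight. -/
def W (k : ℤ) (r s : ℝ) : ℝ := 1 + |(k : ℝ)| + |r| + |s|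

lemma W_one (k : ℤ) (r s : ℝ) : 1 ≤ W k r s := by
  unfold W; linarith [abs_nonneg (k : ℝ), abs_nonneg r, abs_nonneg s]

/-- Rapid decay. -/
def Rd (F : Fn) : Prop := ∀ N : ℕ, ∃ C : ℝ, ∀ k v r s, W k r s ^ N * ‖F k v r s‖ ≤ C

/-- Coinductive form of the Schwartz condition. -/
def T (F : Fn) : Prop := ∃ 𝒞 : Fn → Prop, 𝒞 F ∧
  ∀ G, 𝒞 G → Rd G ∧ ∃ Gr Gs, 𝒞 Gr ∧ 𝒞 Gs ∧ HasD G Gr Gs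

lemma T.rd {F : Fn} (h : T F) : Rd F := by
  obtain ⟨C, hF, h⟩ := h
  exact (h F hF).1

lemma T.hasD {F : Fn} (h : T F) : ∃ Fr Fs, T Fr ∧ T Fs ∧ HasD F Fr Fs := by
  obtain ⟨C, hF, h⟩ := h
  obtain ⟨-, Fr, Fs, h1, h2, h3⟩ := h F hF
  exact ⟨Fr, Fs, ⟨C, h1, h⟩, ⟨C, h2, h⟩, h3⟩

lemma HasD.cont {F Fr Fs : Fn} (h : HasD F Fr Fs) (k : ℤ) (v : Torus) :
    Continuous (fun p : ℝ × ℝ => F k v p.1 p.2) :=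
  continuous_iff_continuousAt.2 fun p => (h k v p.1 p.2).continuousAt

lemma T.cont {F : Fn} (h : T F) (k : ℤ) (v : Torus) :
    Continuous (fun p : ℝ × ℝ => F k v p.1 p.2) := by
  obtain ⟨_, _, _, _, h⟩ := h.hasD
  exact h.cont k v

lemma T.cont2 {F : Fn} (h : T F) (k : ℤ) (v : Torus) (r : ℝ) :
    Continuous (fun t : ℝ => F k v r t) :=
  (h.cont k v).comp (by fun_prop : Continuous fun t : ℝ => (r, t))

lemma HasD.r {F Fr Fs : Fn} (h : HasD F Fr Fs) (k v r s) :
    HasDerivAt (fun u => F k v u s) (Fr k v r s) r := by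
  have h1 : HasDerivAt (fun u : ℝ => (u, s)) ((1 : ℝ), (0 : ℝ)) r :=
    (hasDerivAt_id r).prodMk (hasDerivAt_const r s)
  have := (h k v r s).comp_hasDerivAt r h1
  simpa [LL_apply, Function.comp_def] using this

lemma HasD.s {F Fr Fs : Fn} (h : HasD F Fr Fs) (k v r s) :
    HasDerivAt (fun u => F k v r u) (Fs k v r s) s := by
  have h1 : HasDerivAt (fun u : ℝ => (r, u)) ((0 : ℝ), (1 : ℝ)) s :=
    (hasDerivAt_const s r).prodMk (hasDerivAt_id s)
  have := (h k v r s).comp_hasDerivAt s h1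
  simpa [LL_apply, Function.comp_def] using this

lemma T.smul {F : Fn} (h : T F) (c : ℂ) : T (fun k v r s => c * F k v r s) := by
  refine ⟨fun G => ∃ H, T H ∧ G = fun k v r s => c * H k v r s, ⟨F, h, rfl⟩, ?_⟩
  rintro _ ⟨H, hH, rfl⟩
  refine ⟨fun N => ?_, ?_⟩
  · obtain ⟨C, hC⟩ := hH.rd N
    refine ⟨‖c‖ * C, fun k v r s => ?_⟩
    rw [norm_mul]
    calc _ = ‖c‖ * (W k r s ^ N * ‖H k v r s‖) := by ring
      _ ≤ _ := by gcongr; exact hC k v r s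
  · obtain ⟨Hr, Hs, h1, h2, h3⟩ := hH.hasD
    refine ⟨_, _, ⟨Hr, h1, rfl⟩, ⟨Hs, h2, rfl⟩, fun k v r s => ?_⟩
    refine ((h3 k v r s).const_mul c).congr_fderiv ?_
    ext <;> simp [LL_apply]

lemma T.add {F F' : Fn} (h : T F) (h' : T F') : T (fun k v r s => F k v r s + F' k v r s) := by
  refine ⟨fun G => ∃ H H', T H ∧ T H' ∧ G = fun k v r s => H k v r s + H' k v r s,
    ⟨F, F', h, h', rfl⟩, ?_⟩
  rintro _ ⟨H, H', hH, hH', rfl⟩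
  refine ⟨fun N => ?_, ?_⟩
  · obtain ⟨C, hC⟩ := hH.rd N
    obtain ⟨C', hC'⟩ := hH'.rd N
    refine ⟨C + C', fun k v r s => ?_⟩
    have := W_one k r s
    calc _ ≤ W k r s ^ N * (‖H k v r s‖ + ‖H' k v r s‖) := by gcongr; exact norm_add_le _ _
      _ ≤ _ := by rw [mul_add]; exact add_le_add (hC k v r s) (hC' k v r s)
  · obtain ⟨Hr, Hs, h1, h2, h3⟩ := hH.hasD
    obtain ⟨Hr', Hs', h1', h2', h3'⟩ := hH'.hasD
    refine ⟨_, _, ⟨Hr, Hr', h1, h1', rfl⟩, ⟨Hs, Hs', h2, h2', rfl⟩, fun k v r s => ?_⟩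
    refine ((h3 k v r s).add (h3' k v r s)).congr_fderiv ?_
    ext <;> simp [LL_apply]

lemma T.lin {F : Fn} (h : T F) (a b c : ℝ) :
    T (fun k v r s => ((a * k + b * r + c * s : ℝ) : ℂ) * F k v r s) := by
  refine ⟨fun G => ∃ H H', T H ∧ T H' ∧
    G = fun k v r s => H k v r s + ((a * k + b * r + c * s : ℝ) : ℂ) * H' k v r s,
    ⟨_, F, h.smul 0, h, by simp⟩, ?_⟩
  rintro _ ⟨H, H', hH, hH', rfl⟩
  refine ⟨fun N => ?_, ?_⟩
  · obtain ⟨C, hC⟩ := hH.rd N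
    obtain ⟨C', hC'⟩ := hH'.rd (N + 1)
    refine ⟨C + (|a| + |b| + |c|) * C', fun k v r s => ?_⟩
    have := W_one k r s
    have h2 : ‖((a * k + b * r + c * s : ℝ) : ℂ)‖ ≤ (|a| + |b| + |c|) * W k r s := by
      rw [Complex.norm_real, Real.norm_eq_abs]
      calc |a * k + b * r + c * s| ≤ |a| * |(k : ℝ)| + |b| * |r| + |c| * |s| := by
            rw [← abs_mul, ← abs_mul, ← abs_mul]; exact abs_add_three _ _ _
        _ ≤ |a| * W k r s + |b| * W k r s + |c| * W k r s := by
            unfold W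
            gcongr <;> linarith [abs_nonneg (k : ℝ), abs_nonneg r, abs_nonneg s]
        _ = _ := by ring
    calc _ ≤ W k r s ^ N * (‖H k v r s‖ + (|a| + |b| + |c|) * W k r s * ‖H' k v r s‖) := by
            gcongr
            refine (norm_add_le _ _).trans ?_
            rw [norm_mul]
            gcongr
      _ = W k r s ^ N * ‖H k v r s‖ + (|a| + |b| + |c|) * (W k r s ^ (N+1) * ‖H' k v r s‖) := by
            ring
      _ ≤ _ := by
            gcongr
            exacts [hC k v r s, hC' k v r s]
  · obtain ⟨Hr, Hs, h1, h2, h3⟩ := hH.hasD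
    obtain ⟨Hr', Hs', h1', h2', h3'⟩ := hH'.hasD
    refine ⟨_, _, ⟨_, Hr', h1.add (hH'.smul b), h1', rfl⟩, ⟨_, Hs', h2.add (hH'.smul c), h2', rfl⟩,
      fun k v r s => ?_⟩
    have hl : HasFDerivAt (fun p : ℝ × ℝ => ((a * k + b * p.1 + c * p.2 : ℝ) : ℂ)) (LL b c)
        (r, s) := by
      have : (fun p : ℝ × ℝ => ((a * k + b * p.1 + c * p.2 : ℝ) : ℂ)) =
          fun p => LL b c p + ((a * k : ℝ) : ℂ) := by
        ext p; simp [LL_apply]; ring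
      rw [this]
      exact (LL b c).hasFDerivAt.add_const _
    refine ((h3 k v r s).add (hl.mul (h3' k v r s))).congr_fderiv ?_
    ext <;> simp [LL_apply] <;> ring

lemma T.comp {F : Fn} (h : T F) (φ : ℤ → Torus) (a c e a' c' e' K : ℝ)
    (hK : ∀ k r s, W k r s ≤ K * W k (a * r + c * s + e * k) (a' * r + c' * s + e' * k)) :
    T (fun k v r s => F k (v + φ k) (a * r + c * s + e * k) (a' * r + c' * s + e' * k)) := by
  refine ⟨fun G => ∃ H, T H ∧ G = fun k v r s =>
    H k (v + φ k) (a * r + c * s + e * k) (a' * r + c' * s + e' * k), ⟨F, h, rfl⟩, ?_⟩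
  rintro _ ⟨H, hH, rfl⟩
  have hK0 : 0 ≤ K := by
    have h1 := hK 0 0 0
    have h2 := W_one 0 0 0
    by_contra hneg
    push Not at hneg
    have h3 := W_one 0 (a * 0 + c * 0 + e * (0 : ℤ)) (a' * 0 + c' * 0 + e' * (0 : ℤ))
    nlinarith
  refine ⟨fun N => ?_, ?_⟩
  · obtain ⟨C, hC⟩ := hH.rd N
    refine ⟨K ^ N * C, fun k v r s => ?_⟩
    have := W_one k r s
    calc _ ≤ (K * W k (a * r + c * s + e * k) (a' * r + c' * s + e' * k)) ^ N *
          ‖H k (v + φ k) (a * r + c * s + e * k) (a' * r + c' * s + e' * k)‖ := by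
          gcongr
          exact hK k r s
      _ = K ^ N * (W k (a * r + c * s + e * k) (a' * r + c' * s + e' * k) ^ N *
          ‖H k (v + φ k) (a * r + c * s + e * k) (a' * r + c' * s + e' * k)‖) := by ring
      _ ≤ _ := by gcongr; exact hC _ _ _ _
  · obtain ⟨Hr, Hs, h1, h2, h3⟩ := hH.hasD
    refine ⟨_, _, ⟨_, (h1.smul a).add (h2.smul a'), rfl⟩, ⟨_, (h1.smul c).add (h2.smul c'), rfl⟩,
      fun k v r s => ?_⟩
    have hl (x y z : ℝ) : HasFDerivAt (fun p : ℝ × ℝ => x * p.1 + y * p.2 + z * k)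
        (x • ContinuousLinearMap.fst ℝ ℝ ℝ + y • ContinuousLinearMap.snd ℝ ℝ ℝ) (r, s) :=
      ((hasFDerivAt_fst.const_mul x).add (hasFDerivAt_snd.const_mul y)).add_const _
    have := (h3 k (v + φ k) (a * r + c * s + e * k) (a' * r + c' * s + e' * k)).comp (r, s)
      (f := fun p : ℝ × ℝ => (a * p.1 + c * p.2 + e * k, a' * p.1 + c' * p.2 + e' * k))
      ((hl a c e).prodMk (hl a' c' e'))
    refine (this).congr_fderiv ?_
    ext <;> simp [LL_apply]

/-- Partial Fourier transform. -/
def PF (c : ℝ) (F : Fn) : Fn := fun k v r s =>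
  ∫ t : ℝ, F k v r t * Complex.exp (((c * t * s : ℝ) : ℂ) * Complex.I)

lemma Rd.bound {F : Fn} (h : Rd F) : ∃ C, 0 ≤ C ∧ ∀ k v r t, ‖F k v r t‖ ≤ C * (1 + t ^ 2)⁻¹ := by
  obtain ⟨C, hC⟩ := h 2
  have hC0 : 0 ≤ C := le_trans (by have := W_one 0 0 0; positivity) (hC 0 0 0 0)
  refine ⟨C, hC0, fun k v r t => ?_⟩
  rw [← div_eq_mul_inv, le_div_iff₀ (by positivity), mul_comm]
  refine le_trans ?_ (hC k v r t)
  gcongr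
  have h1 : 1 + |t| ≤ W k r t := by
    unfold W; linarith [abs_nonneg (k : ℝ), abs_nonneg r]
  calc 1 + t ^ 2 ≤ (1 + |t|) ^ 2 := by nlinarith [abs_nonneg t, sq_abs t]
    _ ≤ _ := by gcongr

lemma norm_ex (x : ℝ) : ‖Complex.exp ((x : ℂ) * Complex.I)‖ = 1 :=
  Complex.norm_exp_ofReal_mul_I x

lemma T.integrable {F : Fn} (h : T F) (k v r) : Integrable (fun t => F k v r t) := by
  obtain ⟨C, hC0, hC⟩ := h.rd.bound
  refine (integrable_inv_one_add_sq.const_mul C).mono' (h.cont2 k v r).aestronglyMeasurable ?_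
  exact Filter.Eventually.of_forall fun t => hC k v r t

lemma T.integrable' {F : Fn} (h : T F) (c : ℝ) (k v r s) :
    Integrable (fun t => F k v r t * Complex.exp (((c * t * s : ℝ) : ℂ) * Complex.I)) := by
  refine (h.integrable k v r).norm.mono'
    ((h.cont2 k v r).mul (by fun_prop)).aestronglyMeasurable ?_
  exact Filter.Eventually.of_forall fun t => by rw [norm_mul, norm_ex, mul_one]

lemma PF_bound {F : Fn} (h : T F) (c : ℝ) : ∃ C, ∀ k v r s, ‖PF c F k v r s‖ ≤ C := by
  obtain ⟨C, hC0, hC⟩ := h.rd.bound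
  refine ⟨∫ t : ℝ, C * (1 + t ^ 2)⁻¹, fun k v r s => ?_⟩
  refine norm_integral_le_of_norm_le (integrable_inv_one_add_sq.const_mul C) ?_
  exact Filter.Eventually.of_forall fun t => by rw [norm_mul, norm_ex, mul_one]; exact hC k v r t

lemma PF_cmul {F G : Fn} (c : ℝ) (k v r s) (z : ℂ) (h : ∀ t, G k v r t = z * F k v r t) :
    PF c G k v r s = z * PF c F k v r s := by
  unfold PF
  rw [← integral_const_mul]
  congr 1; ext t; rw [h, mul_assoc]

lemma PF_ds {F Fr Fs : Fn} (hF : T F) (hs : T Fs) (h : HasD F Fr Fs) (c : ℝ) (k v r s) :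
    PF c Fs k v r s = -((c * s : ℝ) * Complex.I) * PF c F k v r s := by
  have hv : ∀ x : ℝ, HasDerivAt (fun t : ℝ => Complex.exp (((c * t * s : ℝ) : ℂ) * Complex.I))
      (((c * s : ℝ) * Complex.I) * Complex.exp (((c * x * s : ℝ) : ℂ) * Complex.I)) x := by
    intro x
    have h0 : HasDerivAt (fun t : ℝ => c * t * s) (c * s) x := by
      simpa using ((hasDerivAt_id x).const_mul c).mul_const s
    have := (h0.ofReal_comp.mul_const Complex.I).cexp
    rwa [mul_comm] at this
  have key := integral_mul_deriv_eq_deriv_mul_of_integrable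
    (u := fun t => F k v r t) (u' := fun t => Fs k v r t) (fun x _ => h.s k v r x)
    (fun x _ => hv x)
    (by
      refine ((hF.integrable' c k v r s).const_mul ((c * s : ℝ) * Complex.I)).congr ?_
      exact Filter.Eventually.of_forall fun t => by simp only [Pi.mul_apply]; ring)
    (hs.integrable' c k v r s) (hF.integrable' c k v r s)
  have e1 : ∫ x : ℝ, F k v r x * (((c * s : ℝ) * Complex.I) *
      Complex.exp (((c * x * s : ℝ) : ℂ) * Complex.I)) =
      ((c * s : ℝ) * Complex.I) * PF c F k v r s := by
    unfold PF
    rw [← integral_const_mul]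
    congr 1; ext t; ring
  rw [e1] at key
  rw [neg_mul, key, neg_neg]
  rfl

lemma PF_rd {c : ℝ} (hc : c ≠ 0) (N : ℕ) : ∀ F : Fn, T F →
    ∃ C : ℝ, ∀ k v r s, W k r s ^ N * ‖PF c F k v r s‖ ≤ C := by
  induction N with
  | zero => intro F h; simpa using PF_bound h c
  | succ N ih =>
    intro F h
    obtain ⟨Fr, Fs, hr, hs, hd⟩ := h.hasD
    obtain ⟨C0, h0⟩ := ih F h
    obtain ⟨C1, h1⟩ := ih _ (h.lin 1 0 0)
    obtain ⟨C2, h2⟩ := ih _ (h.lin 0 1 0)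
    obtain ⟨C3, h3⟩ := ih Fs hs
    refine ⟨C0 + C1 + C2 + |c|⁻¹ * C3, fun k v r s => ?_⟩
    have e1 := PF_cmul (F := F) (G := fun k v r s => ((1 * k + 0 * r + 0 * s : ℝ) : ℂ) * F k v r s)
      c k v r s (k : ℝ) (fun t => by simp)
    have e2 := PF_cmul (F := F) (G := fun k v r s => ((0 * k + 1 * r + 0 * s : ℝ) : ℂ) * F k v r s)
      c k v r s r (fun t => by simp)
    have e3 := PF_ds h hs hd c k v r s
    have h0 := h0 k v r s
    have h1 := h1 k v r s
    have h2 := h2 k v r s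
    have h3 := h3 k v r s
    rw [e1, norm_mul, Complex.norm_real, Real.norm_eq_abs] at h1
    rw [e2, norm_mul, Complex.norm_real, Real.norm_eq_abs] at h2
    rw [e3, norm_mul, norm_neg, norm_mul, Complex.norm_real, Real.norm_eq_abs, Complex.norm_I,
      mul_one, abs_mul] at h3
    have hc' : 0 < |c| := abs_pos.2 hc
    have h4 := mul_le_mul_of_nonneg_left h3 (inv_nonneg.2 hc'.le)
    have e5 : |c|⁻¹ * (W k r s ^ N * (|c| * |s| * ‖PF c F k v r s‖)) =
      W k r s ^ N * (|s| * ‖PF c F k v r s‖) := by field_simp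
    rw [e5] at h4
    have : W k r s ^ (N + 1) * ‖PF c F k v r s‖ = W k r s ^ N * ‖PF c F k v r s‖ +
      W k r s ^ N * (|(k : ℝ)| * ‖PF c F k v r s‖) + W k r s ^ N * (|r| * ‖PF c F k v r s‖) +
      W k r s ^ N * (|s| * ‖PF c F k v r s‖) := by
      rw [pow_succ]
      nth_rewrite 2 [W]
      ring
    rw [this]
    linarith

lemma PF_hasD {F Fr Fs : Fn} (hF : T F) (hr : T Fr) (h : HasD F Fr Fs) (c : ℝ) :
    HasD (PF c F) (PF c Fr) (PF c (fun k v r s => (c * Complex.I) *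
      (((0 * k + 0 * r + 1 * s : ℝ) : ℂ) * F k v r s))) := by
  intro k v r s
  have hG := (hF.lin 0 0 1).smul (c * Complex.I)
  set G : Fn := fun k v r s => (c * Complex.I) *
      (((0 * k + 0 * r + 1 * s : ℝ) : ℂ) * F k v r s) with hGdef
  obtain ⟨C1, -, hC1⟩ := hr.rd.bound
  obtain ⟨C2, -, hC2⟩ := hG.rd.bound
  have hLL : ∀ a b : ℂ, ‖LL a b‖ ≤ ‖a‖ + ‖b‖ := by
    intro a b
    refine ContinuousLinearMap.opNorm_le_bound _ (by positivity) fun p => ?_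
    rw [LL_apply, add_mul]
    refine (norm_add_le _ _).trans ?_
    rw [norm_mul, norm_mul, Complex.norm_real, Complex.norm_real, mul_comm, mul_comm ‖(p.2)‖]
    gcongr
    exacts [norm_fst_le p, norm_snd_le p]
  let E : ℝ → ℝ → ℂ := fun t s => Complex.exp (((c * t * s : ℝ) : ℂ) * Complex.I)
  have key := hasFDerivAt_integral_of_dominated_of_fderiv_le (𝕜 := ℝ) (μ := volume)
    (F := fun (p : ℝ × ℝ) t => F k v p.1 t * E t p.2)
    (F' := fun p t => LL (Fr k v p.1 t * E t p.2) (G k v p.1 t * E t p.2))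
    (x₀ := (r, s)) (s := Set.univ) (bound := fun t => C1 * (1 + t ^ 2)⁻¹ + C2 * (1 + t ^ 2)⁻¹)
    Filter.univ_mem
    (Filter.Eventually.of_forall fun p => (hF.integrable' c k v p.1 p.2).aestronglyMeasurable)
    (hF.integrable' c k v r s)
    (by
      apply Continuous.aestronglyMeasurable
      have e1 := (hr.cont2 k v r).mul (by fun_prop : Continuous fun t => E t s)
      have e2 := (hG.cont2 k v r).mul (by fun_prop : Continuous fun t => E t s)
      exact (((ContinuousLinearMap.smulRightL ℝ (ℝ × ℝ) ℂ
        (ContinuousLinearMap.fst ℝ ℝ ℝ)).continuous.comp e1).add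
        ((ContinuousLinearMap.smulRightL ℝ (ℝ × ℝ) ℂ
        (ContinuousLinearMap.snd ℝ ℝ ℝ)).continuous.comp e2)))
    (Filter.Eventually.of_forall fun t p _ => by
      refine (hLL _ _).trans ?_
      rw [norm_mul, norm_mul, norm_ex, mul_one, mul_one]
      exact add_le_add (hC1 _ _ _ _) (hC2 _ _ _ _))
    ((integrable_inv_one_add_sq.const_mul C1).add (integrable_inv_one_add_sq.const_mul C2))
    (Filter.Eventually.of_forall fun t p _ => by
      have h1 : HasFDerivAt (fun p : ℝ × ℝ => F k v p.1 t) (LL (Fr k v p.1 t) 0) p := by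
        have := (h.r k v p.1 t).hasFDerivAt.comp (f := Prod.fst) p (hasFDerivAt_fst (𝕜 := ℝ) (p := p))
        refine (this).congr_fderiv ?_
        ext <;> simp [LL_apply]
      have h2 : HasFDerivAt (fun p : ℝ × ℝ => E t p.2) (LL 0 ((c * t * Complex.I) * E t p.2)) p := by
        have h0 : HasDerivAt (fun u : ℝ => c * t * u) (c * t) p.2 := by
          simpa using (hasDerivAt_id p.2).const_mul (c * t)
        have := ((h0.ofReal_comp.mul_const Complex.I).cexp).hasFDerivAt.comp (f := Prod.snd) p
          (hasFDerivAt_snd (𝕜 := ℝ) (p := p))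
        refine (this).congr_fderiv ?_
        ext <;> simp [LL_apply, E]
        ring
      refine (h1.mul h2).congr_fderiv ?_
      ext <;> simp [LL_apply, G] <;> ring)
  refine (key).congr_fderiv ?_
  have i1 := hr.integrable' c k v r s
  have i2 := hG.integrable' c k v r s
  have iL : Integrable (fun t => LL (Fr k v r t * E t s) (G k v r t * E t s)) :=
    ((ContinuousLinearMap.smulRightL ℝ (ℝ × ℝ) ℂ
        (ContinuousLinearMap.fst ℝ ℝ ℝ)).integrable_comp i1).add
      ((ContinuousLinearMap.smulRightL ℝ (ℝ × ℝ) ℂ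
        (ContinuousLinearMap.snd ℝ ℝ ℝ)).integrable_comp i2)
  change (∫ t, LL (Fr k v r t * E t s) (G k v r t * E t s)) = _
  rw [eq_LL (∫ t, LL (Fr k v r t * E t s) (G k v r t * E t s)),
    ContinuousLinearMap.integral_apply iL, ContinuousLinearMap.integral_apply iL]
  simp [LL_apply, PF, E]

lemma T.PF {F : Fn} (h : T F) {c : ℝ} (hc : c ≠ 0) : T (PF c F) := by
  refine ⟨fun G => ∃ H, T H ∧ G = _root_.PF c H, ⟨F, h, rfl⟩, ?_⟩
  rintro _ ⟨H, hH, rfl⟩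
  refine ⟨fun N => PF_rd hc N H hH, ?_⟩
  obtain ⟨Hr, Hs, h1, h2, h3⟩ := hH.hasD
  exact ⟨_, _, ⟨Hr, h1, rfl⟩, ⟨_, (hH.lin 0 0 1).smul (c * Complex.I), rfl⟩, PF_hasD hH h1 h3 c⟩

lemma T.pdr {F : Fn} (h : T F) : T (fun k v => pdr (F k v)) := by
  obtain ⟨Fr, Fs, h1, h2, h3⟩ := h.hasD
  have : (fun k v => _root_.pdr (F k v)) = Fr := by
    ext k v r s
    exact (h3.r k v r s).deriv
  rwa [this]

lemma T.pds {F : Fn} (h : T F) : T (fun k v => pds (F k v)) := by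
  obtain ⟨Fr, Fs, h1, h2, h3⟩ := h.hasD
  have : (fun k v => _root_.pds (F k v)) = Fs := by
    ext k v r s
    exact (h3.s k v r s).deriv
  rwa [this]

lemma T.pdMulti {F : Fn} (h : T F) (α : ℕ × ℕ) : T (fun k v => pdMulti α (F k v)) := by
  have h1 : ∀ n, T (fun k v => _root_.pds^[n] (F k v)) := by
    intro n
    induction n with
    | zero => exact h
    | succ n ih => simpa only [Function.iterate_succ_apply'] using ih.pds
  have h2 : ∀ n, T (fun k v => _root_.pdr^[n] (_root_.pds^[α.2] (F k v))) := by
    intro n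
    induction n with
    | zero => exact h1 _
    | succ n ih => simpa only [Function.iterate_succ_apply'] using ih.pdr
  exact h2 _

lemma continuous_LL {X : Type*} [TopologicalSpace X] {f g : X → ℂ} (hf : Continuous f)
    (hg : Continuous g) : Continuous fun x => LL (f x) (g x) :=
  ((ContinuousLinearMap.smulRightL ℝ (ℝ × ℝ) ℂ
    (ContinuousLinearMap.fst ℝ ℝ ℝ)).continuous.comp hf).add
    ((ContinuousLinearMap.smulRightL ℝ (ℝ × ℝ) ℂ
    (ContinuousLinearMap.snd ℝ ℝ ℝ)).continuous.comp hg)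

lemma T.contDiff_nat (n : ℕ) : ∀ {F : Fn}, T F → ∀ (k : ℤ) (v : Torus),
    ContDiff ℝ n fun p : ℝ × ℝ => F k v p.1 p.2 := by
  induction n with
  | zero => intro F h k v; exact contDiff_zero.2 (h.cont k v)
  | succ n ih =>
    intro F h k v
    obtain ⟨Fr, Fs, h1, h2, h3⟩ := h.hasD
    push_cast
    rw [contDiff_succ_iff_hasFDerivAt]
    refine ⟨fun p => LL (Fr k v p.1 p.2) (Fs k v p.1 p.2), ?_, fun p => h3 k v p.1 p.2⟩
    exact ((ContinuousLinearMap.smulRightL ℝ (ℝ × ℝ) ℂ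
      (ContinuousLinearMap.fst ℝ ℝ ℝ)).contDiff.comp (ih h1 k v)).add
      ((ContinuousLinearMap.smulRightL ℝ (ℝ × ℝ) ℂ
      (ContinuousLinearMap.snd ℝ ℝ ℝ)).contDiff.comp (ih h2 k v))

lemma T.isSB {F : Fn} (h : T F)
    (hc : ∀ k : ℤ, Continuous fun p : Torus × ℝ × ℝ => F k p.1 p.2.1 p.2.2) :
    IsSchwartzBruhat F := by
  refine ⟨hc, fun k v => contDiff_infty.2 fun n => T.contDiff_nat n h k v, fun N α => ?_⟩
  obtain ⟨C, hC⟩ := (h.pdMulti α).rd N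
  refine ⟨4 * C, fun k v r s => ?_⟩
  have h1 : |(k : ℝ)| ^ N + |r| ^ N + |s| ^ N + 1 ≤ 4 * W k r s ^ N := by
    have hk := abs_nonneg (k : ℝ)
    have hr := abs_nonneg r
    have hs := abs_nonneg s
    have e1 : |(k : ℝ)| ^ N ≤ W k r s ^ N := by gcongr; unfold W; linarith
    have e2 : |r| ^ N ≤ W k r s ^ N := by gcongr; unfold W; linarith
    have e3 : |s| ^ N ≤ W k r s ^ N := by gcongr; unfold W; linarith
    have e4 : 1 ≤ W k r s ^ N := one_le_pow₀ (W_one k r s)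
    linarith
  calc _ ≤ 4 * W k r s ^ N * ‖_root_.pdMulti α (F k v) r s‖ := by gcongr
    _ = 4 * (W k r s ^ N * ‖_root_.pdMulti α (F k v) r s‖) := by ring
    _ ≤ _ := by gcongr; exact hC k v r s

/-- Smoothness of a curried function. -/
def Sm (f : ℝ → ℝ → ℂ) : Prop := ContDiff ℝ (⊤ : ℕ∞) fun p : ℝ × ℝ => f p.1 p.2

lemma Sm.hasD {f : ℝ → ℝ → ℂ} (h : Sm f) (r s : ℝ) :
    HasFDerivAt (fun p : ℝ × ℝ => f p.1 p.2) (LL (pdr f r s) (pds f r s)) (r, s) := by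
  have hd : HasFDerivAt (fun p : ℝ × ℝ => f p.1 p.2)
      (fderiv ℝ (fun p : ℝ × ℝ => f p.1 p.2) (r, s)) (r, s) :=
    (h.differentiable (by simp) (r, s)).hasFDerivAt
  have hD : HasD (fun _ _ => f)
      (fun _ _ r s => fderiv ℝ (fun p : ℝ × ℝ => f p.1 p.2) (r, s) (1, 0))
      (fun _ _ r s => fderiv ℝ (fun p : ℝ × ℝ => f p.1 p.2) (r, s) (0, 1)) := by
    intro k v r s
    rw [← eq_LL]
    exact (h.differentiable (by simp) (r, s)).hasFDerivAt
  have e1 : pdr f r s = _ := (hD.r 0 0 r s).deriv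
  have e2 : pds f r s = _ := (hD.s 0 0 r s).deriv
  rw [e1, e2]
  exact hD 0 0 r s

lemma Sm.fderiv_eq {f : ℝ → ℝ → ℂ} (h : Sm f) (p : ℝ × ℝ) :
    fderiv ℝ (fun p : ℝ × ℝ => f p.1 p.2) p = LL (pdr f p.1 p.2) (pds f p.1 p.2) :=
  (h.hasD p.1 p.2).fderiv

lemma Sm.pdr_eq {f : ℝ → ℝ → ℂ} (h : Sm f) (p : ℝ × ℝ) :
    pdr f p.1 p.2 = fderiv ℝ (fun p : ℝ × ℝ => f p.1 p.2) p (1, 0) := by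
  rw [h.fderiv_eq, LL_apply]; simp

lemma Sm.pds_eq {f : ℝ → ℝ → ℂ} (h : Sm f) (p : ℝ × ℝ) :
    pds f p.1 p.2 = fderiv ℝ (fun p : ℝ × ℝ => f p.1 p.2) p (0, 1) := by
  rw [h.fderiv_eq, LL_apply]; simp

lemma Sm.fd {f : ℝ → ℝ → ℂ} (h : Sm f) :
    ContDiff ℝ (⊤ : ℕ∞) (fderiv ℝ (fun p : ℝ × ℝ => f p.1 p.2)) :=
  ContDiff.fderiv_right h (by simp)

lemma Sm.pdr {f : ℝ → ℝ → ℂ} (h : Sm f) : Sm (pdr f) := by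
  unfold Sm
  simp_rw [h.pdr_eq]
  exact h.fd.clm_apply contDiff_const

lemma Sm.pds {f : ℝ → ℝ → ℂ} (h : Sm f) : Sm (pds f) := by
  unfold Sm
  simp_rw [h.pds_eq]
  exact h.fd.clm_apply contDiff_const

lemma Sm.comm {f : ℝ → ℝ → ℂ} (h : Sm f) : _root_.pds (_root_.pdr f) = _root_.pdr (_root_.pds f) := by
  ext r s
  have hs := second_derivative_symmetric (𝕜 := ℝ) (x := (r, s))
    (fun p => (h.differentiable (by simp) p).hasFDerivAt)
    ((h.fd.differentiable (by simp) (r, s)).hasFDerivAt) (1, 0) (0, 1)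
  rw [h.pdr.pds_eq (r, s), h.pds.pdr_eq (r, s)]
  simp_rw [h.pdr_eq, h.pds_eq]
  have hdd := h.fd.differentiable (by simp) (r, s)
  rw [fderiv_clm_apply hdd (by fun_prop), fderiv_clm_apply hdd (by fun_prop)]
  simpa using hs.symm

lemma Sm.comm_iter (n : ℕ) : ∀ {f : ℝ → ℝ → ℂ}, Sm f →
    _root_.pds^[n] (_root_.pdr f) = _root_.pdr (_root_.pds^[n] f) := by
  induction n with
  | zero => intro f _; rfl
  | succ n ih =>
    intro f h
    rw [Function.iterate_succ_apply, Function.iterate_succ_apply, h.comm, ih h.pds]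

lemma W_pow_le (N : ℕ) (k : ℤ) (r s : ℝ) :
    W k r s ^ N ≤ 4 ^ N * (|(k : ℝ)| ^ N + |r| ^ N + |s| ^ N + 1) := by
  have hk := abs_nonneg (k : ℝ)
  have hr := abs_nonneg r
  have hs := abs_nonneg s
  have hk' := pow_nonneg hk N
  have hr' := pow_nonneg hr N
  have hs' := pow_nonneg hs N
  have key : ∀ x : ℝ, W k r s ≤ 4 * x → x ^ N ≤ |(k : ℝ)| ^ N + |r| ^ N + |s| ^ N + 1 →
      W k r s ^ N ≤ 4 ^ N * (|(k : ℝ)| ^ N + |r| ^ N + |s| ^ N + 1) := by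
    intro x h1 h2
    have := W_one k r s
    calc _ ≤ (4 * x) ^ N := by gcongr
      _ = 4 ^ N * x ^ N := mul_pow _ _ _
      _ ≤ _ := by gcongr
  by_cases c1 : |(k : ℝ)| ≤ 1 ∧ |r| ≤ 1 ∧ |s| ≤ 1
  · exact key 1 (by unfold W; linarith) (by rw [one_pow]; linarith)
  · by_cases c2 : |r| ≤ |(k : ℝ)| ∧ |s| ≤ |(k : ℝ)|
    · exact key |(k : ℝ)| (by unfold W; grind) (by linarith)
    · by_cases c3 : |s| ≤ |r|
      · exact key |r| (by unfold W; grind) (by linarith)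
      · exact key |s| (by unfold W; grind) (by linarith)

lemma IsSchwartzBruhat.T {F : Fn} (h : IsSchwartzBruhat F) : T F := by
  refine ⟨fun F => (∀ k v, Sm (F k v)) ∧ ∀ (N : ℕ) (α : ℕ × ℕ), ∃ C : ℝ, ∀ (k : ℤ) (v : Torus)
    (r s : ℝ), (|(k : ℝ)| ^ N + |r| ^ N + |s| ^ N + 1) * ‖pdMulti α (F k v) r s‖ ≤ C, h.2, ?_⟩
  rintro G ⟨hS, hB⟩
  refine ⟨fun N => ?_, fun k v => pdr (G k v), fun k v => pds (G k v),
    ⟨fun k v => (hS k v).pdr, fun N α => ?_⟩, ⟨fun k v => (hS k v).pds, fun N α => ?_⟩,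
    fun k v r s => (hS k v).hasD r s⟩
  · obtain ⟨C, hC⟩ := hB N (0, 0)
    refine ⟨4 ^ N * C, fun k v r s => ?_⟩
    calc _ ≤ 4 ^ N * (|(k : ℝ)| ^ N + |r| ^ N + |s| ^ N + 1) * ‖G k v r s‖ := by
            gcongr
            exact W_pow_le N k r s
      _ = 4 ^ N * ((|(k : ℝ)| ^ N + |r| ^ N + |s| ^ N + 1) * ‖G k v r s‖) := by ring
      _ ≤ _ := by gcongr; exact hC k v r s
  · obtain ⟨C, hC⟩ := hB N (α.1 + 1, α.2)
    refine ⟨C, fun k v r s => ?_⟩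
    have := hC k v r s
    unfold pdMulti at this ⊢
    rwa [Function.iterate_succ_apply, ← Sm.comm_iter _ (hS k v)] at this
  · obtain ⟨C, hC⟩ := hB N (α.1, α.2 + 1)
    refine ⟨C, fun k v r s => ?_⟩
    have := hC k v r s
    unfold pdMulti at this ⊢
    rwa [Function.iterate_succ_apply] at this

lemma PF_continuous {F : Fn} (h : T F)
    (hc : ∀ k : ℤ, Continuous fun p : Torus × ℝ × ℝ => F k p.1 p.2.1 p.2.2) (c : ℝ) (k : ℤ) :
    Continuous fun p : Torus × ℝ × ℝ => PF c F k p.1 p.2.1 p.2.2 := by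
  obtain ⟨C, hC0, hC⟩ := h.rd.bound
  unfold PF
  refine continuous_of_dominated (bound := fun t => C * (1 + t ^ 2)⁻¹)
    (fun p => (h.integrable' c k _ _ _).aestronglyMeasurable)
    (fun p => Filter.Eventually.of_forall fun t => ?_) (integrable_inv_one_add_sq.const_mul C)
    (Filter.Eventually.of_forall fun t => ?_)
  · rw [norm_mul, norm_ex, mul_one]; exact hC _ _ _ _
  · have h1 : Continuous fun p : Torus × ℝ × ℝ => F k p.1 p.2.1 t :=
      (hc k).comp (by fun_prop : Continuous fun p : Torus × ℝ × ℝ => (p.1, p.2.1, t))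
    exact h1.mul (by fun_prop)

open scoped FourierTransform in
lemma PF_fourier (F : Fn) (k v r) :
    (fun s => PF (-(2 * Real.pi)) F k v r s) = 𝓕 (fun t => F k v r t) := by
  ext s
  rw [Real.fourier_real_eq_integral_exp_smul]
  unfold PF
  congr 1; ext t
  rw [smul_eq_mul, mul_comm]
  congr 3
  ring_nf

open scoped FourierTransform in
lemma PF_fourierInv (F : Fn) (k v r) :
    (fun s => PF (2 * Real.pi) F k v r s) = 𝓕⁻ (fun t => F k v r t) := by
  ext s
  rw [Real.fourierInv_eq_fourier_neg, ← PF_fourier]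
  unfold PF
  congr 1; ext t
  congr 4
  ring

lemma two_pi_ne : (2 * Real.pi) ≠ 0 := by positivity

open scoped FourierTransform in
lemma PF_inv1 {F : Fn} (h : T F) : PF (2 * Real.pi) (PF (-(2 * Real.pi)) F) = F := by
  ext k v r s
  have h1 := congrFun (PF_fourierInv (PF (-(2 * Real.pi)) F) k v r) s
  have hi := (h.PF (neg_ne_zero.2 two_pi_ne)).integrable k v r
  rw [PF_fourier] at hi h1
  rw [h1, (h.cont2 k v r).fourierInv_fourier_eq (h.integrable k v r) hi]

open scoped FourierTransform in
lemma PF_inv2 {F : Fn} (h : T F) : PF (-(2 * Real.pi)) (PF (2 * Real.pi) F) = F := by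
  ext k v r s
  have h1 := congrFun (PF_fourier (PF (2 * Real.pi) F) k v r) s
  have hi := (h.PF (neg_ne_zero.2 two_pi_ne)).integrable k v r
  rw [PF_fourier] at hi
  rw [PF_fourierInv] at h1
  rw [h1, (h.cont2 k v r).fourier_fourierInv_eq (h.integrable k v r) hi]

lemma Xi_eq (θ : ℝ) (b : ℤ) (F : Fn) : Xi θ b F = fun k v r s =>
    PF (-(2 * Real.pi)) F k (v + -(((k : ℝ) * θ : ℝ) : Torus))
      ((b : ℝ) * r + (b : ℝ) * s + (b : ℝ) * k) (0 * r + 1 * s + 0 * k) := by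
  ext k v r s
  unfold Xi PF
  congr 1; ext t
  congr 2
  · ring
  · congr 3; ring

/-- The shear used in the inverse map. -/
def Sh (θ : ℝ) (b : ℤ) (F : Fn) : Fn := fun k v r s =>
  F k (v + (((k : ℝ) * θ : ℝ) : Torus)) ((b : ℝ)⁻¹ * r + (-1) * s + (-1) * k)
    (0 * r + 1 * s + 0 * k)

lemma Xi'_eq (θ : ℝ) (b : ℤ) (F : Fn) : Xi' θ b F = PF (2 * Real.pi) (Sh θ b F) := by
  ext k v r s
  unfold Xi' PF Sh
  congr 1; ext t
  congr 2
  · ring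
  · ring

lemma one_le_abs_b {b : ℤ} (hb : b ≠ 0) : 1 ≤ |(b : ℝ)| := by
  exact_mod_cast Int.one_le_abs hb

lemma T_Xi (θ : ℝ) {b : ℤ} (hb : b ≠ 0) {F : Fn} (h : T F) : T (Xi θ b F) := by
  rw [Xi_eq]
  refine (h.PF (neg_ne_zero.2 two_pi_ne)).comp (fun k => -(((k : ℝ) * θ : ℝ) : Torus))
    b b b 0 1 0 2 fun k r s => ?_
  have h1 := one_le_abs_b hb
  have e : (b : ℝ) * r + b * s + b * k = b * (r + s + k) := by ring
  unfold W
  rw [e, abs_mul]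
  have h2 : |r| ≤ |r + s + k| + |s| + |(k : ℝ)| := by
    have : r = (r + s + k) - s - k := by ring
    calc |r| = |(r + s + k) - s - k| := by rw [← this]
      _ ≤ |(r + s + k) - s| + |(k : ℝ)| := abs_sub _ _
      _ ≤ _ := by gcongr; exact abs_sub _ _
  have h3 : 1 * |r + s + k| ≤ |(b : ℝ)| * |r + s + k| := by gcongr
  have h4 : 0 * r + 1 * s + 0 * (k : ℝ) = s := by ring
  rw [h4]
  linarith [abs_nonneg (r + s + k), abs_nonneg (k : ℝ), abs_nonneg s]

lemma T_Sh (θ : ℝ) {b : ℤ} (hb : b ≠ 0) {F : Fn} (h : T F) : T (Sh θ b F) := by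
  refine h.comp (fun k => (((k : ℝ) * θ : ℝ) : Torus))
    (b : ℝ)⁻¹ (-1) (-1) 0 1 0 (1 + |(b : ℝ)|) fun k r s => ?_
  have h1 := one_le_abs_b hb
  have hb' : (b : ℝ) ≠ 0 := by exact_mod_cast hb
  have h4 : 0 * r + 1 * s + 0 * (k : ℝ) = s := by ring
  rw [h4]
  set x := (b : ℝ)⁻¹ * r + (-1) * s + (-1) * k with hx
  have hr : r = b * (x + s + k) := by rw [hx]; field_simp; ring
  have h2 : |r| ≤ |(b : ℝ)| * (|x| + |s| + |(k : ℝ)|) := by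
    rw [hr, abs_mul]; gcongr; exact abs_add_three _ _ _
  unfold W
  nlinarith [abs_nonneg x, abs_nonneg (k : ℝ), abs_nonneg s]

/-!
STATEMENT 12: Ξ and Ξ' map the Schwartz–Bruhat space 𝒮₂ into itself and are
mutually inverse bijections of 𝒮₂.
-/

theorem stmt12 (θ : ℝ) (b : ℤ) (hb : b ≠ 0)
    (F : ℤ → Torus → ℝ → ℝ → ℂ) (hF : IsSchwartzBruhat F) :
    IsSchwartzBruhat (Xi θ b F) ∧ IsSchwartzBruhat (Xi' θ b F) ∧
    Xi' θ b (Xi θ b F) = F ∧ Xi θ b (Xi' θ b F) = F := by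
  have hT : T F := hF.T
  have hb' : (b : ℝ) ≠ 0 := by exact_mod_cast hb
  refine ⟨(T_Xi θ hb hT).isSB fun k => ?_, ?_, ?_, ?_⟩
  · rw [Xi_eq]
    exact (PF_continuous hT hF.1 _ k).comp (by fun_prop : Continuous fun p : Torus × ℝ × ℝ =>
      (p.1 + -(((k : ℝ) * θ : ℝ) : Torus), (b : ℝ) * p.2.1 + (b : ℝ) * p.2.2 + (b : ℝ) * k,
        0 * p.2.1 + 1 * p.2.2 + 0 * (k : ℝ)))
  · rw [Xi'_eq]
    refine ((T_Sh θ hb hT).PF two_pi_ne).isSB (PF_continuous (T_Sh θ hb hT) (fun k => ?_) _)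
    exact (hF.1 k).comp (by fun_prop : Continuous fun p : Torus × ℝ × ℝ =>
      (p.1 + (((k : ℝ) * θ : ℝ) : Torus), (b : ℝ)⁻¹ * p.2.1 + (-1) * p.2.2 + (-1) * (k : ℝ),
        0 * p.2.1 + 1 * p.2.2 + 0 * (k : ℝ)))
  · rw [Xi'_eq]
    have : Sh θ b (Xi θ b F) = PF (-(2 * Real.pi)) F := by
      rw [Xi_eq]
      ext k v r s
      unfold Sh
      simp only
      congr 1
      · abel
      · field_simp; ring
      · ring
    rw [this, PF_inv1 hT]
  · rw [Xi_eq, Xi'_eq, PF_inv2 (T_Sh θ hb hT)]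
    ext k v r s
    unfold Sh
    congr 1
    · abel
    · field_simp; ring
    · ring

end
end

section
/- Fix θ ∈ ℝ and a nonzero integer b, and let Ξ be the map on 𝒮₂ given by (ΞF)(k,[x],r,s) := ∫_ℝ F(k, [x−kθ], b(r+s+k), t)·e^{−2πits} dt. For F₁, F₂ ∈ 𝒮₂, l₁, l₂ ∈ ℤ, and representatives v, w ∈ ℝ of classes [v],[w] ∈ 𝕋, define ⟨F₁,F₂⟩^𝓡(l₁,[v],l₂,[w]) := Σ_{k₁,k₂∈ℤ} ∫_ℝ e^{2πitl₂}·conj(F₁)(k₁, [v−k₁θ], k₂+k₁θ−v+w, t)·F₂(k₁+l₂−l₁, [v−(k₁+l₂)θ], k₂+k₁θ−v+w, t) dt, and ⟨F₁,F₂⟩^𝓟(l₁,[v],l₂,[w]) := Σ_{k₁,k₂∈ℤ} ∫_ℝ conj(F₁)(k₁, [v], (k₂+k₁θ−v+w)/b − r, r)·F₂(k₁+l₂−l₁, [v−l₁θ], (k₂+k₁θ−v+w)/b − r + l₁, r−l₂) dr. Then all these sums and integrals converge absolutely, both expressions are independent of the chosen representatives v, w, and for all (l₁,[v],l₂,[w]):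 ⟨ΞF₁, ΞF₂⟩^𝓟(l₁,[v],l₂,[w]) = ⟨F₁,F₂⟩^𝓡(l₁,[v],l₂,[w]). -/
noncomputable section

open MeasureTheory

/-- Integrand of the (k₁,k₂)-term of the pre-inner product ⟨F₁,F₂⟩^𝓡. -/
noncomputable def innerRIntegrand (θ : ℝ) (F₁ F₂ : ℤ → Torus → ℝ → ℝ → ℂ)
    (l₁ l₂ k₁ k₂ : ℤ) (v w : ℝ) (t : ℝ) : ℂ :=
  Complex.exp (((2 * Real.pi * t * (l₂ : ℝ) : ℝ) : ℂ) * Complex.I) *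
    (starRingEnd ℂ)
      (F₁ k₁ (((v - (k₁ : ℝ) * θ : ℝ)) : Torus)
        ((k₂ : ℝ) + (k₁ : ℝ) * θ - v + w) t) *
    F₂ (k₁ + l₂ - l₁) (((v - ((k₁ : ℝ) + (l₂ : ℝ)) * θ : ℝ)) : Torus)
      ((k₂ : ℝ) + (k₁ : ℝ) * θ - v + w) t

/-- The pre-inner product ⟨F₁,F₂⟩^𝓡(l₁,[v],l₂,[w]) (computed with
representatives v, w ∈ ℝ). -/
noncomputable def innerR (θ : ℝ) (F₁ F₂ : ℤ → Torus → ℝ → ℝ → ℂ)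
    (l₁ l₂ : ℤ) (v w : ℝ) : ℂ :=
  ∑' k : ℤ × ℤ, ∫ t : ℝ, innerRIntegrand θ F₁ F₂ l₁ l₂ k.1 k.2 v w t

/-- Integrand of the (k₁,k₂)-term of the pre-inner product ⟨F₁,F₂⟩^𝓟. -/
noncomputable def innerPIntegrand (θ : ℝ) (b : ℤ) (F₁ F₂ : ℤ → Torus → ℝ → ℝ → ℂ)
    (l₁ l₂ k₁ k₂ : ℤ) (v w : ℝ) (r : ℝ) : ℂ :=
  (starRingEnd ℂ)
      (F₁ k₁ (((v : ℝ)) : Torus)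
        (((k₂ : ℝ) + (k₁ : ℝ) * θ - v + w) / (b : ℝ) - r) r) *
    F₂ (k₁ + l₂ - l₁) (((v - (l₁ : ℝ) * θ : ℝ)) : Torus)
      (((k₂ : ℝ) + (k₁ : ℝ) * θ - v + w) / (b : ℝ) - r + (l₁ : ℝ)) (r - (l₂ : ℝ))

/-- The pre-inner product ⟨F₁,F₂⟩^𝓟(l₁,[v],l₂,[w]) (computed with
representatives v, w ∈ ℝ). -/
noncomputable def innerP (θ : ℝ) (b : ℤ) (F₁ F₂ : ℤ → Torus → ℝ → ℝ → ℂ)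
    (l₁ l₂ : ℤ) (v w : ℝ) : ℂ :=
  ∑' k : ℤ × ℤ, ∫ r : ℝ, innerPIntegrand θ b F₁ F₂ l₁ l₂ k.1 k.2 v w r


open scoped FourierTransform SchwartzMap

theorem aux_iter (f : ℝ → ℝ → ℂ) (n : ℕ) (r : ℝ) :
    (pds^[n] f) r = iteratedDeriv n (f r) := by
  rw [iteratedDeriv_eq_iterate]
  induction n generalizing f with
  | zero => rfl
  | succ n ih =>
    rw [Function.iterate_succ_apply, Function.iterate_succ_apply, ih]
    rfl

theorem aux_slice {F : ℤ → Torus → ℝ → ℝ → ℂ} (hF : IsSchwartzBruhat F)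
    (k : ℤ) (v : Torus) (r : ℝ) : ∃ f : 𝓢(ℝ, ℂ), ∀ t, f t = F k v r t := by
  obtain ⟨-, h2, h3⟩ := hF
  refine ⟨⟨F k v r, ?_, ?_⟩, fun t => rfl⟩
  · exact (h2 k v).comp (contDiff_const.prodMk contDiff_id)
  · intro N n
    obtain ⟨C, hC⟩ := h3 N (0, n)
    refine ⟨C, fun x => le_trans ?_ (hC k v r x)⟩
    have : pdMulti (0, n) (F k v) r x = iteratedDeriv n (F k v r) x := by
      simp only [pdMulti, Function.iterate_zero, id]
      rw [aux_iter]
    rw [this, norm_iteratedFDeriv_eq_norm_iteratedDeriv, Real.norm_eq_abs]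
    gcongr
    have : 0 ≤ |(k : ℝ)| ^ N := by positivity
    have : 0 ≤ |r| ^ N := by positivity
    linarith

theorem aux_inv (g : 𝓢(ℝ, ℂ)) (l x : ℝ) :
    𝓕⁻ (fun r => 𝓕 g (r - l)) x
      = Complex.exp (((2 * Real.pi * x * l : ℝ) : ℂ) * Complex.I) * g x := by
  rw [Real.fourierInv_eq']
  rw [← integral_add_right_eq_self _ l]
  have h : 𝓕⁻ (𝓕 g) x = g x := by simp
  rw [SchwartzMap.fourierInv_coe, Real.fourierInv_eq'] at h
  rw [← h, ← integral_const_mul]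
  congr 1
  ext r
  simp only [add_sub_cancel_right, smul_eq_mul]
  rw [← mul_assoc, ← Complex.exp_add]
  congr 2
  simp
  ring

theorem aux_planch (f g : 𝓢(ℝ, ℂ)) (l : ℝ) :
    Integrable (fun r => (starRingEnd ℂ) (𝓕 f r) * 𝓕 g (r - l)) ∧
    ∫ r, (starRingEnd ℂ) (𝓕 f r) * 𝓕 g (r - l) =
      ∫ t, Complex.exp (((2 * Real.pi * t * l : ℝ) : ℂ) * Complex.I) *
        (starRingEnd ℂ) (f t) * g t := by
  have hi : Integrable (fun r => 𝓕 g (r - l)) := ((𝓕 g).integrable (μ := volume)).comp_sub_right l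
  constructor
  · obtain ⟨C, hC⟩ := (𝓕 f).decay 0 0
    refine hi.bdd_mul (c := C) ?_ ?_
    · exact (Complex.continuous_conj.comp (𝓕 f).continuous).aestronglyMeasurable
    · refine Filter.Eventually.of_forall fun r => ?_
      simpa using hC.2 r
  · have := VectorFourier.integral_sesq_fourierIntegral_eq_neg_flip (innerSL ℂ (E := ℂ))
      (L := innerₗ ℝ) Real.continuous_fourierChar continuous_inner (f.integrable (μ := volume)) hi
    have h2 : ∀ x, VectorFourier.fourierIntegral Real.fourierChar volume (-(innerₗ ℝ).flip)
        (fun r => 𝓕 g (r - l)) x = 𝓕⁻ (fun r => 𝓕 g (r - l)) x := by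
      intro x; simp [Real.fourierInv_eq, VectorFourier.fourierIntegral, real_inner_comm]
    simp only [h2, aux_inv] at this
    convert this using 1
    · congr 1; ext r
      simp only [innerSL_apply_apply, RCLike.inner_apply]
      rw [mul_comm]; rfl
    · congr 1; ext r
      simp only [innerSL_apply_apply, RCLike.inner_apply]
      ring

theorem aux_fourier (f : 𝓢(ℝ, ℂ)) (s : ℝ) :
    𝓕 f s = ∫ t, f t * Complex.exp (((-(2 * Real.pi * t * s) : ℝ) : ℂ) * Complex.I) := by
  rw [SchwartzMap.fourier_coe, Real.fourier_real_eq_integral_exp_smul]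
  congr 1; ext t
  rw [smul_eq_mul, mul_comm]
  congr 3
  push_cast
  ring

theorem aux_P (θ : ℝ) (b : ℤ) (hb : b ≠ 0)
    {F₁ F₂ : ℤ → Torus → ℝ → ℝ → ℂ}
    (hF₁ : IsSchwartzBruhat F₁) (hF₂ : IsSchwartzBruhat F₂)
    (l₁ l₂ k₁ k₂ : ℤ) (v w : ℝ) :
    Integrable (innerPIntegrand θ b (Xi θ b F₁) (Xi θ b F₂) l₁ l₂ k₁ k₂ v w) ∧
    ∫ r, innerPIntegrand θ b (Xi θ b F₁) (Xi θ b F₂) l₁ l₂ k₁ k₂ v w r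
      = ∫ t, innerRIntegrand θ F₁ F₂ l₁ l₂ k₁ (k₂ + b * k₁) v w t := by
  have hb' : (b : ℝ) ≠ 0 := by exact_mod_cast hb
  set c : ℝ := ((k₂ + b * k₁ : ℤ) : ℝ) + (k₁ : ℝ) * θ - v + w with hc
  obtain ⟨f, hf⟩ := aux_slice hF₁ k₁ ((v - (k₁ : ℝ) * θ : ℝ) : Torus) c
  obtain ⟨g, hg⟩ := aux_slice hF₂ (k₁ + l₂ - l₁)
    ((v - ((k₁ : ℝ) + (l₂ : ℝ)) * θ : ℝ) : Torus) c
  have e1 : innerPIntegrand θ b (Xi θ b F₁) (Xi θ b F₂) l₁ l₂ k₁ k₂ v w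
      = fun r => (starRingEnd ℂ) (𝓕 f r) * 𝓕 g (r - l₂) := by
    ext r
    rw [aux_fourier, aux_fourier]
    simp only [innerPIntegrand, Xi, hf, hg]
    have a1 : (b : ℝ) * ((((k₂ : ℝ) + (k₁ : ℝ) * θ - v + w) / (b : ℝ) - r) + r + (k₁ : ℝ)) = c := by
      rw [hc]; push_cast; field_simp; ring
    have a2 : (b : ℝ) * ((((k₂ : ℝ) + (k₁ : ℝ) * θ - v + w) / (b : ℝ) - r + (l₁ : ℝ))
        + (r - (l₂ : ℝ)) + ((k₁ + l₂ - l₁ : ℤ) : ℝ)) = c := by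
      rw [hc]; push_cast; field_simp; ring
    have a3 : ((v - (l₁ : ℝ) * θ : ℝ) : Torus) - ((((k₁ + l₂ - l₁ : ℤ) : ℝ) * θ : ℝ) : Torus)
        = ((v - ((k₁ : ℝ) + (l₂ : ℝ)) * θ : ℝ) : Torus) := by
      rw [← AddCircle.coe_sub]; congr 1; push_cast; ring
    rw [a1, a2, a3, ← AddCircle.coe_sub]
  have e2 : innerRIntegrand θ F₁ F₂ l₁ l₂ k₁ (k₂ + b * k₁) v w
      = fun t => Complex.exp (((2 * Real.pi * t * (l₂ : ℝ) : ℝ) : ℂ) * Complex.I) *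
        (starRingEnd ℂ) (f t) * g t := by
    ext t
    simp only [innerRIntegrand, hf, hg, hc]
  rw [e1, e2]
  exact aux_planch f g l₂

theorem aux_weight (k c t : ℝ) :
    (1 + k ^ 2) ^ 2 * (1 + c ^ 2) * (1 + t ^ 2) ≤ 8 * (|k| ^ 8 + |c| ^ 8 + |t| ^ 8 + 1) := by
  have key : ∀ x : ℝ, (1 + x ^ 2) ^ 4 ≤ 8 * (1 + |x| ^ 8) := by
    intro x
    have h0 : |x| ^ 8 = (x ^ 2) ^ 4 := by
      rw [← sq_abs x]; ring
    rw [h0]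
    have hy : 0 ≤ x ^ 2 := sq_nonneg x
    generalize x ^ 2 = y at hy
    nlinarith [sq_nonneg (y - 1), sq_nonneg (y ^ 2 - 1), mul_nonneg hy (sq_nonneg (y - 1)),
      sq_nonneg (y * (y - 1))]
  have amgm : ∀ a b c : ℝ, a ^ 2 * b * c ≤ (2 * a ^ 4 + b ^ 4 + c ^ 4) / 4 := by
    intro a b c
    nlinarith [sq_nonneg (a ^ 2 - b * c), sq_nonneg (b ^ 2 - c ^ 2)]
  have h := amgm (1 + k ^ 2) (1 + c ^ 2) (1 + t ^ 2)
  have := key k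
  have := key c
  have := key t
  have : 0 ≤ |k| ^ 8 := by positivity
  have : 0 ≤ |c| ^ 8 := by positivity
  have : 0 ≤ |t| ^ 8 := by positivity
  linarith

theorem aux_peetre (θ d k m : ℝ) :
    1 + m ^ 2 ≤ (2 * (1 + 2 * θ ^ 2 + 2 * d ^ 2)) * (1 + k ^ 2) * (1 + (m + k * θ + d) ^ 2) := by
  have h1 : 1 + m ^ 2 ≤ 2 * (1 + (k * θ + d) ^ 2) * (1 + (m + k * θ + d) ^ 2) := by
    nlinarith [sq_nonneg ((m + k * θ + d) + (k * θ + d)),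
      mul_nonneg (sq_nonneg (k * θ + d)) (sq_nonneg (m + k * θ + d))]
  have h2 : 1 + (k * θ + d) ^ 2 ≤ (1 + 2 * θ ^ 2 + 2 * d ^ 2) * (1 + k ^ 2) := by
    nlinarith [sq_nonneg (k * θ - d), sq_nonneg k, sq_nonneg θ, mul_nonneg (sq_nonneg d) (sq_nonneg k)]
  refine h1.trans ?_
  have h3 : 0 ≤ 1 + (m + k * θ + d) ^ 2 := by positivity
  nlinarith [mul_le_mul_of_nonneg_right h2 h3]

theorem aux_R_bound (θ : ℝ) {F₁ F₂ : ℤ → Torus → ℝ → ℝ → ℂ}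
    (hF₁ : IsSchwartzBruhat F₁) (hF₂ : IsSchwartzBruhat F₂)
    (l₁ l₂ : ℤ) (v w : ℝ) : ∃ K : ℝ, ∀ (k₁ k₂ : ℤ) (t : ℝ),
      ‖innerRIntegrand θ F₁ F₂ l₁ l₂ k₁ k₂ v w t‖ ≤
        K * ((1 + (k₁ : ℝ) ^ 2)⁻¹ * (1 + (k₂ : ℝ) ^ 2)⁻¹) * (1 + t ^ 2)⁻¹ := by
  obtain ⟨C₁, h₁⟩ := hF₁.2.2 8 (0, 0)
  obtain ⟨C₂, h₂⟩ := hF₂.2.2 0 (0, 0)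
  set E : ℝ := 2 * (1 + 2 * θ ^ 2 + 2 * (w - v) ^ 2) with hE
  have hE0 : 0 ≤ E := by positivity
  refine ⟨E * 8 * C₁ * C₂, fun k₁ k₂ t => ?_⟩
  set c : ℝ := (k₂ : ℝ) + (k₁ : ℝ) * θ - v + w with hc
  have b₁ := h₁ k₁ ((v - (k₁ : ℝ) * θ : ℝ) : Torus) c t
  have b₂ := h₂ (k₁ + l₂ - l₁) ((v - ((k₁ : ℝ) + (l₂ : ℝ)) * θ : ℝ) : Torus) c t
  simp only [pdMulti, Function.iterate_zero, id] at b₁ b₂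
  set x := F₁ k₁ ((v - (k₁ : ℝ) * θ : ℝ) : Torus) c t
  set y := F₂ (k₁ + l₂ - l₁) ((v - ((k₁ : ℝ) + (l₂ : ℝ)) * θ : ℝ) : Torus) c t
  have hn : ‖innerRIntegrand θ F₁ F₂ l₁ l₂ k₁ k₂ v w t‖ = ‖x‖ * ‖y‖ := by
    simp only [innerRIntegrand]
    rw [norm_mul, norm_mul, Complex.norm_exp_ofReal_mul_I, one_mul, RCLike.norm_conj]
  rw [hn]
  have hy : ‖y‖ ≤ C₂ := by
    have : 0 ≤ ‖y‖ := norm_nonneg _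
    simp only [pow_zero] at b₂
    linarith
  have hx : (1 + (k₁ : ℝ) ^ 2) * (1 + (k₂ : ℝ) ^ 2) * (1 + t ^ 2) * ‖x‖ ≤ E * 8 * C₁ := by
    have p := aux_peetre θ (w - v) k₁ k₂
    have hcc : (k₂ : ℝ) + k₁ * θ + (w - v) = c := by rw [hc]; ring
    rw [hcc, ← hE] at p
    have q := aux_weight k₁ c t
    calc (1 + (k₁ : ℝ) ^ 2) * (1 + (k₂ : ℝ) ^ 2) * (1 + t ^ 2) * ‖x‖
        ≤ (1 + (k₁ : ℝ) ^ 2) * (E * (1 + (k₁ : ℝ) ^ 2) * (1 + c ^ 2)) * (1 + t ^ 2) * ‖x‖ := by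
          gcongr
      _ = E * ((1 + (k₁ : ℝ) ^ 2) ^ 2 * (1 + c ^ 2) * (1 + t ^ 2)) * ‖x‖ := by ring
      _ ≤ E * (8 * (|(k₁ : ℝ)| ^ 8 + |c| ^ 8 + |t| ^ 8 + 1)) * ‖x‖ := by gcongr
      _ = E * 8 * ((|(k₁ : ℝ)| ^ 8 + |c| ^ 8 + |t| ^ 8 + 1) * ‖x‖) := by ring
      _ ≤ E * 8 * C₁ := by gcongr
  have hpos : 0 < (1 + (k₁ : ℝ) ^ 2) * (1 + (k₂ : ℝ) ^ 2) * (1 + t ^ 2) := by positivity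
  have hx' : ‖x‖ ≤ E * 8 * C₁ * ((1 + (k₁ : ℝ) ^ 2) * (1 + (k₂ : ℝ) ^ 2) * (1 + t ^ 2))⁻¹ := by
    rw [← div_eq_mul_inv, le_div_iff₀ hpos]; linarith
  calc ‖x‖ * ‖y‖ ≤ (E * 8 * C₁ * ((1 + (k₁ : ℝ) ^ 2) * (1 + (k₂ : ℝ) ^ 2) * (1 + t ^ 2))⁻¹) * C₂ :=
        mul_le_mul hx' hy (norm_nonneg _) ((norm_nonneg _).trans hx')
    _ = _ := by rw [mul_inv, mul_inv]; ring

theorem aux_R_int (θ : ℝ) {F₁ F₂ : ℤ → Torus → ℝ → ℝ → ℂ}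
    (hF₁ : IsSchwartzBruhat F₁) (hF₂ : IsSchwartzBruhat F₂)
    (l₁ l₂ k₁ k₂ : ℤ) (v w : ℝ) :
    Integrable (innerRIntegrand θ F₁ F₂ l₁ l₂ k₁ k₂ v w) := by
  obtain ⟨K, hK⟩ := aux_R_bound θ hF₁ hF₂ l₁ l₂ v w
  refine Integrable.mono' (integrable_inv_one_add_sq.const_mul _) ?_
    (Filter.Eventually.of_forall (hK k₁ k₂))
  obtain ⟨f, hf⟩ := aux_slice hF₁ k₁ ((v - (k₁ : ℝ) * θ : ℝ) : Torus)
    ((k₂ : ℝ) + (k₁ : ℝ) * θ - v + w)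
  obtain ⟨g, hg⟩ := aux_slice hF₂ (k₁ + l₂ - l₁)
    ((v - ((k₁ : ℝ) + (l₂ : ℝ)) * θ : ℝ) : Torus) ((k₂ : ℝ) + (k₁ : ℝ) * θ - v + w)
  apply Continuous.aestronglyMeasurable
  unfold innerRIntegrand
  simp only [← hf, ← hg]
  have := f.continuous
  have := g.continuous
  have := Complex.continuous_conj.comp f.continuous
  have h1 : Continuous fun t : ℝ =>
      Complex.exp (((2 * Real.pi * t * (l₂ : ℝ) : ℝ) : ℂ) * Complex.I) := by fun_prop
  exact (h1.mul this).mul g.continuous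

theorem aux_sum_int : Summable fun k : ℤ => (1 + (k : ℝ) ^ 2)⁻¹ := by
  have h : Summable fun k : ℤ => 1 / (k : ℝ) ^ 2 :=
    Real.summable_one_div_int_pow.mpr (by norm_num)
  refine Summable.of_norm_bounded_eventually h ?_
  have : ∀ᶠ k : ℤ in Filter.cofinite, k ≠ 0 := by
    exact (Set.finite_singleton (0 : ℤ)).eventually_cofinite_notMem
  filter_upwards [this] with k hk
  have hk' : 0 < (k : ℝ) ^ 2 := by positivity
  rw [Real.norm_of_nonneg (by positivity), one_div]
  gcongr
  linarith

theorem aux_R_sum (θ : ℝ) {F₁ F₂ : ℤ → Torus → ℝ → ℝ → ℂ}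
    (hF₁ : IsSchwartzBruhat F₁) (hF₂ : IsSchwartzBruhat F₂)
    (l₁ l₂ : ℤ) (v w : ℝ) :
    Summable (fun k : ℤ × ℤ =>
        ‖∫ t : ℝ, innerRIntegrand θ F₁ F₂ l₁ l₂ k.1 k.2 v w t‖) := by
  obtain ⟨K, hK⟩ := aux_R_bound θ hF₁ hF₂ l₁ l₂ v w
  have hs : Summable fun k : ℤ × ℤ => (1 + (k.1 : ℝ) ^ 2)⁻¹ * (1 + (k.2 : ℝ) ^ 2)⁻¹ :=
    aux_sum_int.mul_of_nonneg aux_sum_int (fun k => by positivity) (fun k => by positivity)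
  refine Summable.of_nonneg_of_le (fun _ => norm_nonneg _) (fun k => ?_)
    ((hs.mul_left K).mul_right (∫ t : ℝ, (1 + t ^ 2)⁻¹))
  rw [← integral_const_mul]
  exact norm_integral_le_of_norm_le (integrable_inv_one_add_sq.const_mul _)
    (Filter.Eventually.of_forall (hK k.1 k.2))

/-- The shear `(k₁, k₂) ↦ (k₁, k₂ + b k₁)` of `ℤ × ℤ`. -/
def auxShear (b : ℤ) : ℤ × ℤ ≃ ℤ × ℤ where
  toFun k := (k.1, k.2 + b * k.1)
  invFun k := (k.1, k.2 - b * k.1)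
  left_inv k := by simp
  right_inv k := by simp

theorem aux_coe (v : ℝ) (m : ℤ) (x : ℝ) : ((v + m - x : ℝ) : Torus) = ((v - x : ℝ) : Torus) := by
  have : v + m - x = (v - x) + m • (1 : ℝ) := by simp; ring
  rw [this, AddCircle.coe_add, AddCircle.coe_zsmul, AddCircle.coe_period, smul_zero, add_zero]

theorem aux_indep_R (θ : ℝ) (F₁ F₂ : ℤ → Torus → ℝ → ℝ → ℂ) (l₁ l₂ : ℤ) (v w : ℝ) (m n : ℤ) :
    innerR θ F₁ F₂ l₁ l₂ v w = innerR θ F₁ F₂ l₁ l₂ (v + m) (w + n) := by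
  unfold innerR
  rw [← ((Equiv.refl ℤ).prodCongr (Equiv.addRight (n - m))).tsum_eq]
  · refine tsum_congr fun k => ?_
    congr 1; ext t
    simp only [innerRIntegrand, aux_coe, Equiv.prodCongr_apply, Prod.map, Equiv.refl_apply, Equiv.coe_addRight]
    have : ((k.2 + (n - m) : ℤ) : ℝ) + (k.1 : ℝ) * θ - v + w
      = (k.2 : ℝ) + (k.1 : ℝ) * θ - (v + m) + (w + n) := by push_cast; ring
    rw [this]

theorem aux_main (θ : ℝ) (b : ℤ) (hb : b ≠ 0)
    {F₁ F₂ : ℤ → Torus → ℝ → ℝ → ℂ}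
    (hF₁ : IsSchwartzBruhat F₁) (hF₂ : IsSchwartzBruhat F₂) (l₁ l₂ : ℤ) (v w : ℝ) :
    innerP θ b (Xi θ b F₁) (Xi θ b F₂) l₁ l₂ v w = innerR θ F₁ F₂ l₁ l₂ v w := by
  unfold innerP innerR
  rw [← (auxShear b).tsum_eq
    (fun k : ℤ × ℤ => ∫ t : ℝ, innerRIntegrand θ F₁ F₂ l₁ l₂ k.1 k.2 v w t)]
  exact tsum_congr fun k => (aux_P θ b hb hF₁ hF₂ l₁ l₂ k.1 k.2 v w).2

/-!
STATEMENT 14: The sums and integrals defining ⟨·,·⟩^𝓡 and ⟨·,·⟩^𝓟 converge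
absolutely, are independent of the chosen representatives, and Ξ is
inner-product preserving: ⟨ΞF₁, ΞF₂⟩^𝓟 = ⟨F₁,F₂⟩^𝓡.
-/

theorem stmt14 (θ : ℝ) (b : ℤ) (hb : b ≠ 0)
    (F₁ F₂ : ℤ → Torus → ℝ → ℝ → ℂ)
    (hF₁ : IsSchwartzBruhat F₁) (hF₂ : IsSchwartzBruhat F₂) :
    -- absolute convergence of all the integrals
    (∀ (l₁ l₂ k₁ k₂ : ℤ) (v w : ℝ),
      Integrable (innerRIntegrand θ F₁ F₂ l₁ l₂ k₁ k₂ v w) (volume : Measure ℝ) ∧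
      Integrable (innerPIntegrand θ b (Xi θ b F₁) (Xi θ b F₂) l₁ l₂ k₁ k₂ v w)
        (volume : Measure ℝ)) ∧
    -- absolute convergence of the sums
    (∀ (l₁ l₂ : ℤ) (v w : ℝ),
      Summable (fun k : ℤ × ℤ =>
        ‖∫ t : ℝ, innerRIntegrand θ F₁ F₂ l₁ l₂ k.1 k.2 v w t‖) ∧
      Summable (fun k : ℤ × ℤ =>
        ‖∫ r : ℝ, innerPIntegrand θ b (Xi θ b F₁) (Xi θ b F₂) l₁ l₂ k.1 k.2 v w r‖)) ∧
    -- independence of the chosen representatives v, w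
    (∀ (l₁ l₂ : ℤ) (v v' w w' : ℝ),
      (∃ m : ℤ, v' = v + m) → (∃ m : ℤ, w' = w + m) →
        innerR θ F₁ F₂ l₁ l₂ v w = innerR θ F₁ F₂ l₁ l₂ v' w' ∧
        innerP θ b (Xi θ b F₁) (Xi θ b F₂) l₁ l₂ v w
          = innerP θ b (Xi θ b F₁) (Xi θ b F₂) l₁ l₂ v' w') ∧
    -- Ξ preserves the inner products
    (∀ (l₁ l₂ : ℤ) (v w : ℝ),
      innerP θ b (Xi θ b F₁) (Xi θ b F₂) l₁ l₂ v w
        = innerR θ F₁ F₂ l₁ l₂ v w) := by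
  refine ⟨fun l₁ l₂ k₁ k₂ v w => ⟨aux_R_int θ hF₁ hF₂ l₁ l₂ k₁ k₂ v w,
    (aux_P θ b hb hF₁ hF₂ l₁ l₂ k₁ k₂ v w).1⟩, fun l₁ l₂ v w => ⟨aux_R_sum θ hF₁ hF₂ l₁ l₂ v w, ?_⟩,
    ?_, aux_main θ b hb hF₁ hF₂⟩
  · have h := (auxShear b).summable_iff.mpr (aux_R_sum θ hF₁ hF₂ l₁ l₂ v w)
    refine h.congr fun k => ?_
    rw [(aux_P θ b hb hF₁ hF₂ l₁ l₂ k.1 k.2 v w).2]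
    rfl
  · rintro l₁ l₂ v _ w _ ⟨m, rfl⟩ ⟨n, rfl⟩
    refine ⟨aux_indep_R θ F₁ F₂ l₁ l₂ v w m n, ?_⟩
    rw [aux_main θ b hb hF₁ hF₂, aux_main θ b hb hF₁ hF₂]
    exact aux_indep_R θ F₁ F₂ l₁ l₂ v w m n

end
end

section
/- Fix θ ∈ ℝ and a nonzero integer b. For F₁, F₂ ∈ 𝒮₂, l₁, l₂ ∈ ℤ, and representatives v, w ∈ ℝ of [v],[w] ∈ 𝕋, let ⟨F₁,F₂⟩(l₁,[v],l₂,[w]) := Σ_{k₁,k₂∈ℤ} ∫_ℝ conj(F₁)(k₁, [v], (k₂+k₁θ−v+w)/b − r, r)·F₂(k₁+l₂−l₁, [v−l₁θ], (k₂+k₁θ−v+w)/b − r + l₁, r−l₂) dr. Then there exists a function μ : {6,7,8,…} → [0,∞) (depending only on θ and b) such that for all integers M, N ≥ 6 and all F₁, F₂ ∈ 𝒮₂: each value ⟨F₁,F₂⟩(l₁,[v],l₂,[w]) is given by an absolutely convergent sum and integral, and sup_{[v],[w]∈𝕋} Σ_{l₁,l₂∈ℤ} |⟨F₁,F₂⟩(l₁,[v],l₂,[w])|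 ≤ μ(M)·‖F₁‖_{M,0}·μ(N)·‖F₂‖_{N,0}. -/
noncomputable section

open MeasureTheory

/-!
STATEMENT 16: The I-norm estimate: there is μ : {6,7,…} → [0,∞) (depending only
on θ and b) such that for M, N ≥ 6 and F₁, F₂ ∈ 𝒮₂ all sums and integrals
defining ⟨F₁,F₂⟩ converge absolutely and
sup_{[v],[w]} Σ_{l₁,l₂} |⟨F₁,F₂⟩(l₁,[v],l₂,[w])| ≤ μ(M)‖F₁‖_{M,0}·μ(N)‖F₂‖_{N,0}.
-/

def hh (x : ℝ) : ENNReal := ENNReal.ofReal ((1 + x ^ 2)⁻¹)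

lemma hh_meas : Measurable hh := by
  unfold hh; fun_prop

lemma hh_neg (x : ℝ) : hh (-x) = hh x := by simp [hh]

def SS : ENNReal := 3 * ∑' n : ℤ, hh n

lemma hh_sum_ne_top : ∑' n : ℤ, hh (n : ℝ) ≠ ⊤ := by
  unfold hh
  have hs : Summable (fun n : ℤ => ((1 : ℝ) + (n : ℝ) ^ 2)⁻¹) := by
    have h1 : Summable (fun n : ℤ => 1 / (n : ℝ) ^ 2) :=
      Real.summable_one_div_int_pow.mpr (by norm_num)
    have h0 : Summable (fun n : ℤ => if n = 0 then (1 : ℝ) else 0) :=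
      (hasSum_ite_eq (0 : ℤ) (1 : ℝ)).summable
    refine Summable.of_nonneg_of_le (fun n => by positivity) (fun n => ?_) (h1.add h0)
    by_cases hn : n = 0
    · subst hn; simp
    · have : (0 : ℝ) < (n : ℝ) ^ 2 := by positivity
      simp only [hn, if_false, add_zero, one_div]
      gcongr
      linarith
  rw [← ENNReal.ofReal_tsum_of_nonneg (fun n => by positivity) hs]
  exact ENNReal.ofReal_ne_top

lemma SS_ne_top : SS ≠ ⊤ := ENNReal.mul_ne_top (by norm_num) hh_sum_ne_top

lemma hh_sum_le (x : ℝ) : ∑' n : ℤ, hh (x + n) ≤ SS := by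
  have e : ∑' n : ℤ, hh (x + n) = ∑' n : ℤ, hh (Int.fract x + n) := by
    rw [← (Equiv.subRight ⌊x⌋).tsum_eq (fun n : ℤ => hh (x + n))]
    refine tsum_congr fun n => ?_
    congr 1
    simp only [Equiv.subRight_apply, Int.cast_sub, Int.fract]
    ring
  rw [e, SS, ← ENNReal.tsum_mul_left]
  refine ENNReal.tsum_le_tsum fun n => ?_
  have h3 : (3 : ENNReal) = ENNReal.ofReal 3 := by simp
  rw [hh, hh, h3, ← ENNReal.ofReal_mul (by norm_num)]
  apply ENNReal.ofReal_le_ofReal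
  have h0 := Int.fract_nonneg x
  have h1 := (Int.fract_lt_one x).le
  generalize Int.fract x = y at *
  rw [← div_eq_mul_inv, inv_eq_one_div, div_le_div_iff₀ (by positivity) (by positivity)]
  nlinarith [sq_nonneg (2 * y + (n : ℝ)), sq_nonneg (y), mul_nonneg h0 (sub_nonneg.2 h1)]

lemma hh_sum_sub_le (x : ℝ) : ∑' n : ℤ, hh (x - n) ≤ SS := by
  refine le_trans (le_of_eq ?_) (hh_sum_le (-x))
  refine tsum_congr fun n => ?_
  rw [← hh_neg]; congr 1; ring

lemma hh_sum_div_le (b : ℤ) (hb : b ≠ 0) (y r : ℝ) :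
    ∑' n : ℤ, hh (((n : ℝ) + y) / b - r) ≤ ENNReal.ofReal ((b : ℝ) ^ 2) * SS := by
  have hb' : (b : ℝ) ≠ 0 := by exact_mod_cast hb
  have hb1 : (1 : ℝ) ≤ (b : ℝ) ^ 2 := by
    have : 1 ≤ b ^ 2 := by have := sq_pos_of_ne_zero hb; omega
    exact_mod_cast this
  refine le_trans ?_ (mul_le_mul_right (hh_sum_le (y - b * r)) _)
  rw [← ENNReal.tsum_mul_left]
  refine ENNReal.tsum_le_tsum fun n => ?_
  rw [hh, hh, ← ENNReal.ofReal_mul (by positivity)]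
  apply ENNReal.ofReal_le_ofReal
  have : ((n : ℝ) + y) / b - r = (y - b * r + n) / b := by field_simp; ring
  rw [this]
  generalize y - b * r + n = z
  rw [← div_eq_mul_inv, inv_eq_one_div, div_le_div_iff₀ (by positivity) (by positivity), div_pow]
  have : (b : ℝ) ^ 2 * (1 + z ^ 2 / b ^ 2) = b ^ 2 + z ^ 2 := by field_simp
  rw [this]; linarith

lemma hh_int_ne_top : ∫⁻ x, hh x ≠ ⊤ := by
  unfold hh
  rw [← ofReal_integral_eq_lintegral_ofReal integrable_inv_one_add_sq
    (Filter.Eventually.of_forall fun x => by positivity)]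
  exact ENNReal.ofReal_ne_top

lemma cube_le (M : ℕ) (hM : 6 ≤ M) (x : ℝ) : (1 + x ^ 2) ^ 3 ≤ 8 * (1 + |x| ^ M) := by
  rw [← sq_abs]
  have h0 := abs_nonneg x
  generalize |x| = t at *
  rcases le_total t 1 with h | h
  · have : (1 + t ^ 2) ^ 3 ≤ (1 + 1 ^ 2) ^ 3 := by gcongr
    have : 0 ≤ t ^ M := by positivity
    linarith
  · have h1 : t ^ 6 ≤ t ^ M := pow_le_pow_right₀ h hM
    have h2 : (1 + t ^ 2) ^ 3 ≤ (t ^ 2 + t ^ 2) ^ 3 := by gcongr; nlinarith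
    nlinarith

lemma prod_le (M : ℕ) (hM : 6 ≤ M) (x y z : ℝ) :
    (1 + x ^ 2) * (1 + y ^ 2) * (1 + z ^ 2) ≤ 8 * (|x| ^ M + |y| ^ M + |z| ^ M + 1) := by
  have hx := cube_le M hM x
  have hy := cube_le M hM y
  have hz := cube_le M hM z
  have px : 0 ≤ |x| ^ M := by positivity
  have py : 0 ≤ |y| ^ M := by positivity
  have pz : 0 ≤ |z| ^ M := by positivity
  have ha : 0 < 1 + x ^ 2 := by positivity
  have hb : 0 < 1 + y ^ 2 := by positivity
  have hc : 0 < 1 + z ^ 2 := by positivity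
  generalize 1 + x ^ 2 = a at *
  generalize 1 + y ^ 2 = b at *
  generalize 1 + z ^ 2 = c at *
  have : 3 * (a * b * c) ≤ a ^ 3 + b ^ 3 + c ^ 3 := by
    nlinarith [mul_nonneg (add_pos (add_pos ha hb) hc).le
      (add_nonneg (add_nonneg (sq_nonneg (a - b)) (sq_nonneg (b - c))) (sq_nonneg (a - c)))]
  linarith

lemma SB_nonneg (F : ℤ → Torus → ℝ → ℝ → ℂ) (N : ℕ) : 0 ≤ SBseminorm F N (0, 0) :=
  Real.iSup_nonneg fun p => by positivity

lemma SB_bound (F : ℤ → Torus → ℝ → ℝ → ℂ) (hF : IsSchwartzBruhat F) (N : ℕ) (hN : 6 ≤ N)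
    (k : ℤ) (v : Torus) (r s : ℝ) :
    ‖F k v r s‖ₑ ≤ ENNReal.ofReal (8 * SBseminorm F N (0, 0)) * (hh k * hh r * hh s) := by
  have hle : (|(k : ℝ)| ^ N + |r| ^ N + |s| ^ N + 1) * ‖F k v r s‖ ≤ SBseminorm F N (0, 0) := by
    obtain ⟨C, hC⟩ := hF.2.2 N (0, 0)
    exact le_ciSup (f := fun p : ℤ × Torus × ℝ × ℝ =>
      (|(p.1 : ℝ)| ^ N + |p.2.2.1| ^ N + |p.2.2.2| ^ N + 1) *
      ‖pdMulti (0, 0) (F p.1 p.2.1) p.2.2.1 p.2.2.2‖)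
      ⟨C, by rintro _ ⟨p, rfl⟩; exact hC _ _ _ _⟩ (k, v, r, s)
  have h0 := SB_nonneg F N
  rw [hh, hh, hh, ← ENNReal.ofReal_mul (by positivity), ← ENNReal.ofReal_mul (by positivity),
    ← ENNReal.ofReal_mul (by positivity), ← ofReal_norm_eq_enorm]
  apply ENNReal.ofReal_le_ofReal
  have hp := prod_le N hN k r s
  rw [← mul_inv, ← mul_inv, ← div_eq_mul_inv, le_div_iff₀ (by positivity)]
  have := mul_le_mul_of_nonneg_left hp (norm_nonneg (F k v r s))
  linarith

lemma hh_le_one (x : ℝ) : hh x ≤ 1 := by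
  rw [hh, ENNReal.ofReal_le_one]
  exact inv_le_one_of_one_le₀ (by nlinarith [sq_nonneg x])

/-- The dominating function. -/
def dom (θ : ℝ) (b : ℤ) (v w : ℝ) (l k : ℤ × ℤ) (r : ℝ) : ENNReal :=
  hh k.1 * hh (((k.2 : ℝ) + (k.1 : ℝ) * θ - v + w) / (b : ℝ) - r) * hh r *
    (hh (((k.2 : ℝ) + (k.1 : ℝ) * θ - v + w) / (b : ℝ) - r + l.1) * hh (r - l.2))

lemma dom_meas (θ : ℝ) (b : ℤ) (v w : ℝ) (l k : ℤ × ℤ) : Measurable (dom θ b v w l k) := by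
  unfold dom
  have := hh_meas
  fun_prop

lemma integrand_le (θ : ℝ) (b : ℤ) (F₁ F₂ : ℤ → Torus → ℝ → ℝ → ℂ)
    (h₁ : IsSchwartzBruhat F₁) (h₂ : IsSchwartzBruhat F₂) (M N : ℕ) (hM : 6 ≤ M) (hN : 6 ≤ N)
    (l k : ℤ × ℤ) (v w r : ℝ) :
    ‖innerPIntegrand θ b F₁ F₂ l.1 l.2 k.1 k.2 v w r‖ₑ ≤
      ENNReal.ofReal (8 * SBseminorm F₁ M (0, 0)) * ENNReal.ofReal (8 * SBseminorm F₂ N (0, 0)) *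
        dom θ b v w l k r := by
  unfold innerPIntegrand dom
  rw [enorm_mul, RCLike.enorm_conj]
  refine (mul_le_mul' (SB_bound F₁ h₁ M hM _ _ _ _) (SB_bound F₂ h₂ N hN _ _ _ _)).trans ?_
  rw [mul_mul_mul_comm]
  gcongr
  conv_rhs => rw [← one_mul (hh (_ + (l.1 : ℝ)))]
  gcongr
  exact hh_le_one _

def KK (b : ℤ) : ENNReal :=
  SS * (ENNReal.ofReal ((b : ℝ) ^ 2) * SS) * (SS * SS) * ∫⁻ x, hh x

lemma KK_ne_top (b : ℤ) : KK b ≠ ⊤ := by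
  unfold KK
  have := SS_ne_top
  have := hh_int_ne_top
  finiteness

lemma dom_sum (θ : ℝ) (b : ℤ) (hb : b ≠ 0) (v w r : ℝ) :
    ∑' (l : ℤ × ℤ) (k : ℤ × ℤ), dom θ b v w l k r ≤
      SS * (ENNReal.ofReal ((b : ℝ) ^ 2) * SS) * (SS * SS) * hh r := by
  rw [ENNReal.tsum_comm]
  have h1 : ∀ k : ℤ × ℤ, ∑' l : ℤ × ℤ, dom θ b v w l k r ≤
      hh k.1 * hh (((k.2 : ℝ) + (k.1 : ℝ) * θ - v + w) / (b : ℝ) - r) * (hh r * (SS * SS)) := by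
    intro k
    unfold dom
    rw [ENNReal.tsum_mul_left, mul_assoc]
    gcongr
    rw [ENNReal.summable.tsum_prod' (fun _ => ENNReal.summable)]
    simp only [ENNReal.tsum_mul_left, ENNReal.tsum_mul_right]
    gcongr
    · exact hh_sum_le _
    · exact hh_sum_sub_le _
  refine (ENNReal.tsum_le_tsum h1).trans ?_
  rw [ENNReal.tsum_mul_right]
  have h2 : ∑' k : ℤ × ℤ, hh k.1 * hh (((k.2 : ℝ) + (k.1 : ℝ) * θ - v + w) / (b : ℝ) - r) ≤
      SS * (ENNReal.ofReal ((b : ℝ) ^ 2) * SS) := by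
    rw [ENNReal.summable.tsum_prod' (fun _ => ENNReal.summable)]
    have h3 : ∀ k₁ : ℤ,
        ∑' k₂ : ℤ, hh k₁ * hh (((k₂ : ℝ) + (k₁ : ℝ) * θ - v + w) / (b : ℝ) - r) ≤
        hh (0 + k₁) * (ENNReal.ofReal ((b : ℝ) ^ 2) * SS) := by
      intro k₁
      rw [ENNReal.tsum_mul_left, zero_add]
      gcongr
      refine le_trans (le_of_eq ?_) (hh_sum_div_le b hb ((k₁ : ℝ) * θ - v + w) r)
      refine tsum_congr fun n => ?_
      congr 3
      ring
    refine (ENNReal.tsum_le_tsum h3).trans ?_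
    rw [ENNReal.tsum_mul_right]
    gcongr
    exact hh_sum_le 0
  refine (mul_le_mul' h2 le_rfl).trans (le_of_eq ?_)
  ring

lemma total_le (θ : ℝ) (b : ℤ) (hb : b ≠ 0) (F₁ F₂ : ℤ → Torus → ℝ → ℝ → ℂ)
    (h₁ : IsSchwartzBruhat F₁) (h₂ : IsSchwartzBruhat F₂) (M N : ℕ) (hM : 6 ≤ M) (hN : 6 ≤ N)
    (v w : ℝ) :
    ∑' (l : ℤ × ℤ) (k : ℤ × ℤ), ∫⁻ r, ‖innerPIntegrand θ b F₁ F₂ l.1 l.2 k.1 k.2 v w r‖ₑ ≤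
      ENNReal.ofReal (8 * SBseminorm F₁ M (0, 0)) * ENNReal.ofReal (8 * SBseminorm F₂ N (0, 0)) *
        KK b := by
  calc _ ≤ ∑' (l : ℤ × ℤ) (k : ℤ × ℤ), ∫⁻ r, ENNReal.ofReal (8 * SBseminorm F₁ M (0, 0)) *
            ENNReal.ofReal (8 * SBseminorm F₂ N (0, 0)) * dom θ b v w l k r :=
        ENNReal.tsum_le_tsum fun l => ENNReal.tsum_le_tsum fun k =>
          lintegral_mono fun r => integrand_le θ b F₁ F₂ h₁ h₂ M N hM hN l k v w r
    _ = ENNReal.ofReal (8 * SBseminorm F₁ M (0, 0)) * ENNReal.ofReal (8 * SBseminorm F₂ N (0, 0)) *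
          ∫⁻ r, ∑' (l : ℤ × ℤ) (k : ℤ × ℤ), dom θ b v w l k r := by
        rw [lintegral_tsum fun l =>
          (Measurable.ennreal_tsum fun k => dom_meas θ b v w l k).aemeasurable,
          ← ENNReal.tsum_mul_left]
        refine tsum_congr fun l => ?_
        rw [lintegral_tsum fun k => (dom_meas θ b v w l k).aemeasurable,
          ← ENNReal.tsum_mul_left]
        refine tsum_congr fun k => ?_
        rw [lintegral_const_mul _ (dom_meas θ b v w l k)]
    _ ≤ _ := by
        gcongr
        unfold KK
        rw [← lintegral_const_mul _ hh_meas]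
        exact lintegral_mono fun r => dom_sum θ b hb v w r

theorem stmt16 (θ : ℝ) (b : ℤ) (hb : b ≠ 0) :
    ∃ μ : ℕ → ℝ, (∀ n, 0 ≤ μ n) ∧
      ∀ (M N : ℕ), 6 ≤ M → 6 ≤ N →
        ∀ (F₁ F₂ : ℤ → Torus → ℝ → ℝ → ℂ),
          IsSchwartzBruhat F₁ → IsSchwartzBruhat F₂ →
          -- absolute convergence of the integrals
          (∀ (l₁ l₂ k₁ k₂ : ℤ) (v w : ℝ),
            Integrable (innerPIntegrand θ b F₁ F₂ l₁ l₂ k₁ k₂ v w)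
              (volume : Measure ℝ)) ∧
          -- absolute convergence of the (k₁,k₂)-sums
          (∀ (l₁ l₂ : ℤ) (v w : ℝ),
            Summable (fun k : ℤ × ℤ =>
              ‖∫ r : ℝ, innerPIntegrand θ b F₁ F₂ l₁ l₂ k.1 k.2 v w r‖)) ∧
          -- absolute convergence of the (l₁,l₂)-sums
          (∀ v w : ℝ,
            Summable (fun l : ℤ × ℤ => ‖innerP θ b F₁ F₂ l.1 l.2 v w‖)) ∧
          -- the I-norm estimate
          (⨆ p : ℝ × ℝ, ∑' l : ℤ × ℤ, ‖innerP θ b F₁ F₂ l.1 l.2 p.1 p.2‖)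
            ≤ μ M * SBseminorm F₁ M (0, 0) * (μ N * SBseminorm F₂ N (0, 0)) := by
  refine ⟨fun _ => 8 * Real.sqrt (KK b).toReal, fun n => by positivity, ?_⟩
  intro M N hM hN F₁ F₂ h₁ h₂
  have hT := total_le θ b hb F₁ F₂ h₁ h₂ M N hM hN
  have hKt : ENNReal.ofReal (8 * SBseminorm F₁ M (0, 0)) *
      ENNReal.ofReal (8 * SBseminorm F₂ N (0, 0)) * KK b ≠ ⊤ :=
    ENNReal.mul_ne_top (ENNReal.mul_ne_top ENNReal.ofReal_ne_top ENNReal.ofReal_ne_top)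
      (KK_ne_top b)
  have hk : ∀ (l : ℤ × ℤ) (v w : ℝ),
      ∑' k : ℤ × ℤ, ‖∫ r : ℝ, innerPIntegrand θ b F₁ F₂ l.1 l.2 k.1 k.2 v w r‖ₑ ≤
      ∑' k : ℤ × ℤ, ∫⁻ r, ‖innerPIntegrand θ b F₁ F₂ l.1 l.2 k.1 k.2 v w r‖ₑ :=
    fun l v w => ENNReal.tsum_le_tsum fun k => enorm_integral_le_lintegral_enorm _
  have hl : ∀ v w : ℝ, ∑' l : ℤ × ℤ, ‖innerP θ b F₁ F₂ l.1 l.2 v w‖ₑ ≤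
      ENNReal.ofReal (8 * SBseminorm F₁ M (0, 0)) *
      ENNReal.ofReal (8 * SBseminorm F₂ N (0, 0)) * KK b := fun v w =>
    (ENNReal.tsum_le_tsum fun l => enorm_tsum_le_tsum_enorm.trans (hk l v w)).trans (hT v w)
  refine ⟨?_, ?_, ?_, ?_⟩
  · intro l₁ l₂ k₁ k₂ v w
    refine ⟨?_, ?_⟩
    · apply Continuous.aestronglyMeasurable
      have c₁ := (h₁.2.1 k₁ (v : Torus)).continuous
      have c₂ := (h₂.2.1 (k₁ + l₂ - l₁) ((v - (l₁ : ℝ) * θ : ℝ) : Torus)).continuous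
      unfold innerPIntegrand
      refine Continuous.mul (Complex.continuous_conj.comp ?_) ?_
      · exact c₁.comp (g := fun p : ℝ × ℝ => F₁ k₁ (v : Torus) p.1 p.2)
          (f := fun r : ℝ => ((((k₂ : ℝ) + (k₁ : ℝ) * θ - v + w) / (b : ℝ) - r), r)) (by fun_prop)
      · exact c₂.comp (f := fun r : ℝ =>
          ((((k₂ : ℝ) + (k₁ : ℝ) * θ - v + w) / (b : ℝ) - r + (l₁ : ℝ)), r - (l₂ : ℝ)))
          (by fun_prop)
    · refine lt_of_le_of_lt ?_ (lt_of_le_of_lt (hT v w) hKt.lt_top)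
      exact (ENNReal.le_tsum (f := fun k : ℤ × ℤ =>
        ∫⁻ r, ‖innerPIntegrand θ b F₁ F₂ l₁ l₂ k.1 k.2 v w r‖ₑ) (k₁, k₂)).trans
        (ENNReal.le_tsum (f := fun l : ℤ × ℤ => ∑' k : ℤ × ℤ,
        ∫⁻ r, ‖innerPIntegrand θ b F₁ F₂ l.1 l.2 k.1 k.2 v w r‖ₑ) (l₁, l₂))
  · intro l₁ l₂ v w
    rw [← tsum_enorm_ne_top_iff_summable_norm]
    refine ne_top_of_le_ne_top hKt (((hk (l₁, l₂) v w).trans ?_).trans (hT v w))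
    exact ENNReal.le_tsum (f := fun l : ℤ × ℤ => ∑' k : ℤ × ℤ,
        ∫⁻ r, ‖innerPIntegrand θ b F₁ F₂ l.1 l.2 k.1 k.2 v w r‖ₑ) (l₁, l₂)
  · intro v w
    rw [← tsum_enorm_ne_top_iff_summable_norm]
    exact ne_top_of_le_ne_top hKt (hl v w)
  · refine ciSup_le fun p => ?_
    have h := ENNReal.toReal_mono hKt (hl p.1 p.2)
    rw [ENNReal.tsum_toReal_eq (fun _ => enorm_ne_top), ENNReal.toReal_mul, ENNReal.toReal_mul,
      ENNReal.toReal_ofReal (mul_nonneg (by norm_num) (SB_nonneg F₁ M)),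
      ENNReal.toReal_ofReal (mul_nonneg (by norm_num) (SB_nonneg F₂ N))] at h
    simp only [toReal_enorm] at h
    refine h.trans (le_of_eq ?_)
    have hs := Real.mul_self_sqrt (ENNReal.toReal_nonneg (a := KK b))
    linear_combination (-64 * SBseminorm F₁ M (0, 0) * SBseminorm F₂ N (0, 0)) * hs

end
end
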